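/- arXiv:1507.04132 — 2 statements merged into one kernel-verified Lean document; each statement's English description precedes it below -/
import Mathlib

section
/- Let T be an automorphism of a standard Borel probability space (X,μ) with quasi-discrete spectrum. Then T has the AOP property. -/
open MeasureTheory Filter

/-- `c` is an eigenvalue of `T` w.r.t. `μ`. -/
def IsEigenvalue {X : Type*} [MeasurableSpace X] (T : X → X) (μ : Measure X) (c : ℂ) : Prop :=
  ∃ f : X → ℂ, MemLp f 2 μ ∧ ¬ (f =ᵐ[μ] 0) ∧
    (fun x => f (T x)) =ᵐ[μ] (fun x => c * f x)

/-- The quasi-eigenfunction groups `E_k(T)`. -/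
def quasiEigenfunctions {X : Type*} [MeasurableSpace X] (T : X → X) (μ : Measure X) :
    ℕ → Set (X → ℂ)
  | 0 => {f | ∃ c : ℂ, ‖c‖ = 1 ∧ IsEigenvalue T μ c ∧ f = fun _ => c}
  | (k+1) => {f | Measurable f ∧ (∀ᵐ x ∂μ, ‖f x‖ = 1) ∧
      (fun x => f (T x) / f x) ∈ quasiEigenfunctions T μ k}

/-- `T` is totally ergodic: every nonzero power of `T` is ergodic. -/
def TotallyErgodic {X : Type*} [MeasurableSpace X] (T : X → X) (μ : Measure X) : Prop :=
  ∀ m : ℕ, m ≠ 0 → Ergodic (T^[m]) μ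

/-- `(X,μ,T)` has quasi-discrete spectrum. -/
def QuasiDiscreteSpectrum {X : Type*} [MeasurableSpace X] (T : X → X) (μ : Measure X) : Prop :=
  TotallyErgodic T μ ∧
  Dense ((Submodule.span ℂ
      {g : Lp ℂ 2 μ | ∃ k : ℕ, ∃ f ∈ quasiEigenfunctions T μ k, ⇑g =ᵐ[μ] f} :
        Submodule ℂ (Lp ℂ 2 μ)) : Set (Lp ℂ 2 μ))

/-- `(X,μ,T)` has asymptotically orthogonal powers (AOP). -/
def AOP {X : Type*} [MeasurableSpace X] (T : X → X) (μ : Measure X) : Prop :=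
  ∀ f g : X → ℂ, MemLp f 2 μ → MemLp g 2 μ →
    (∫ x, f x ∂μ) = 0 → (∫ x, g x ∂μ) = 0 →
    ∀ ε > (0:ℝ), ∃ N : ℕ, ∀ r s : ℕ, r.Prime → s.Prime → r ≠ s → N ≤ r → N ≤ s →
      ∀ κ : Measure (X × X), IsProbabilityMeasure κ →
        κ.map Prod.fst = μ → κ.map Prod.snd = μ →
        Ergodic (Prod.map (T^[r]) (T^[s])) κ →
        ‖∫ p, f p.1 * (starRingEnd ℂ) (g p.2) ∂κ‖ ≤ ε

/-!
Quasi-eigenfunctions are the functions `e^{iφ}` for phases `φ` with values in `ℝ / 2πℤ` on which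
some power of the difference operator `D = T - 1` is a constant, the leading coefficient of `φ`. If
`T` is totally ergodic, then lowering the degree for as long as this coefficient is torsion shows
that `φ` is constant or has a non-torsion leading coefficient.

Let `D^k φ = α` and `D^k ψ = β`, not both torsion, and let `κ` be a joining of `T^r` and `T^s`. Then
`φ(x) - ψ(y)` has leading coefficient `r^k α - s^k β` along `T^r × T^s`. This is torsion for at most
one coprime pair `(r, s)`, and otherwise van der Corput differencing gives
`∫ e^{i(φ(x) - ψ(y))} dκ = 0`, whatever `κ` is. So the correlations of quasi-eigenfunctions along
`κ` are eventually those along `μ × μ`. The Markov operators of the joinings are contractions, hence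
they converge weakly to that of `μ × μ` on all of `L²`.
-/

section DifferenceOperators

variable {R M : Type*} [Semiring R] [AddCommGroup M] [Module R M] {σ : Module.End R M} {c x : M}

theorem geom_sum_pow_apply_of_fixed (hc : σ c = c) (n j : ℕ) :
    ((∑ i ∈ Finset.range n, σ ^ i) ^ j) c = n ^ j • c := by
  have hpow (i : ℕ) : (σ ^ i) c = c := by
    rw [Module.End.pow_apply, Function.iterate_fixed hc]
  have hsum : (∑ i ∈ Finset.range n, σ ^ i) c = n • c := by
    simp only [LinearMap.sum_apply, hpow, Finset.sum_const, Finset.card_range]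
  induction j with
  | zero => simp
  | succ j ih => rw [pow_succ, Module.End.mul_apply, hsum, map_nsmul, ih, smul_smul, pow_succ']

theorem sub_one_pow_apply_pow_sub_one_pow {k j : ℕ} (hx : ((σ - 1) ^ (k + j)) x = c)
    (hc : σ c = c) (n : ℕ) : ((σ - 1) ^ k) (((σ ^ n - 1) ^ j) x) = n ^ j • c := by
  have hcomm : Commute (∑ i ∈ Finset.range n, σ ^ i) (σ - 1) :=
    (Commute.sum_left _ _ _ fun i _ => Commute.pow_self σ i).sub_right (.one_right _)
  have hfactor : (σ - 1) ^ k * (σ ^ n - 1) ^ j =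
      (∑ i ∈ Finset.range n, σ ^ i) ^ j * (σ - 1) ^ (k + j) := by
    rw [← geom_sum_mul, hcomm.mul_pow, ← mul_assoc, ← (hcomm.pow_pow j k).eq, mul_assoc, ← pow_add]
  rw [← Module.End.mul_apply, hfactor, Module.End.mul_apply, hx, geom_sum_pow_apply_of_fixed hc]

end DifferenceOperators

theorem eq_and_eq_of_coprime_of_mul_eq_mul {r s r' s' : ℕ} (h : r.Coprime s) (h' : r'.Coprime s')
    (heq : r * s' = r' * s) : r = r' ∧ s = s' := by
  have hr : r = r' := Nat.dvd_antisymm (h.dvd_of_dvd_mul_right ⟨s', heq.symm⟩)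
    (h'.dvd_of_dvd_mul_right ⟨s, heq⟩)
  have hs : s = s' := Nat.dvd_antisymm (h.symm.dvd_of_dvd_mul_left ⟨r', by rw [heq, mul_comm]⟩)
    (h'.symm.dvd_of_dvd_mul_left ⟨r, by rw [← heq, mul_comm]⟩)
  exact ⟨hr, hs⟩

theorem isOfFinAddOrder_of_zsmul {A : Type*} [AddGroup A] {a : A} {z : ℤ} (hz : z ≠ 0)
    (h : IsOfFinAddOrder (z • a)) : IsOfFinAddOrder a := by
  obtain ⟨m, hm, hma⟩ := isOfFinAddOrder_iff_zsmul_eq_zero.1 h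
  exact isOfFinAddOrder_iff_zsmul_eq_zero.2 ⟨m * z, mul_ne_zero hm hz, by rwa [mul_zsmul]⟩

theorem eq_of_isOfFinAddOrder_pow_smul_sub {A : Type*} [AddCommGroup A] {α β : A}
    (h : ¬(IsOfFinAddOrder α ∧ IsOfFinAddOrder β)) {k : ℕ} (hk : k ≠ 0) {r s r' s' : ℕ}
    (hrs : r.Coprime s) (hrs' : r'.Coprime s')
    (ht : IsOfFinAddOrder (r ^ k • α - s ^ k • β))
    (ht' : IsOfFinAddOrder (r' ^ k • α - s' ^ k • β)) : r = r' ∧ s = s' := by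
  have hα : IsOfFinAddOrder (((r * s' : ℤ) ^ k - (r' * s : ℤ) ^ k) • α) := by
    rw [show ((r * s' : ℤ) ^ k - (r' * s : ℤ) ^ k) • α =
      s' ^ k • (r ^ k • α - s ^ k • β) + -(s ^ k • (r' ^ k • α - s' ^ k • β)) by module]
    exact ht.nsmul.add ht'.nsmul.neg
  have hβ : IsOfFinAddOrder (((r * s' : ℤ) ^ k - (r' * s : ℤ) ^ k) • β) := by
    rw [show ((r * s' : ℤ) ^ k - (r' * s : ℤ) ^ k) • β =
      r' ^ k • (r ^ k • α - s ^ k • β) + -(r ^ k • (r' ^ k • α - s' ^ k • β)) by module]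
    exact ht.nsmul.add ht'.nsmul.neg
  have hpow : (r * s' : ℤ) ^ k - (r' * s : ℤ) ^ k = 0 := by
    by_contra hne
    exact h ⟨isOfFinAddOrder_of_zsmul hne hα, isOfFinAddOrder_of_zsmul hne hβ⟩
  refine eq_and_eq_of_coprime_of_mul_eq_mul hrs hrs' (Nat.pow_left_injective hk ?_)
  exact_mod_cast sub_eq_zero.1 hpow

section Koopman

variable {Y Z A : Type*} [MeasurableSpace Y] [MeasurableSpace Z] {ν : Measure Y} {η : Measure Z}
  {π : Z → Y} {S : Y → Y} {R : Z → Z} [TopologicalSpace A] [AddCommGroup A]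
  [IsTopologicalAddGroup A]

/-- The Koopman operator `φ ↦ φ ∘ π` of a measure-preserving map on classes of functions with values
in an abelian topological group; it lives there rather than on `L²` so that phases add. -/
def koopman (hπ : MeasurePreserving π η ν) : (Y →ₘ[ν] A) →ₗ[ℤ] (Z →ₘ[η] A) :=
  AddMonoidHom.toIntLinearMap
  { toFun := fun φ => φ.compMeasurePreserving π hπ
    map_zero' := rfl
    map_add' := fun φ ψ => by
      induction φ, ψ using AEEqFun.induction_on₂ with | _ f hf g hg => rfl }

theorem koopman_iterate (hS : MeasurePreserving S ν ν) (n : ℕ) :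
    (koopman (hS.iterate n) : Module.End ℤ (Y →ₘ[ν] A)) = koopman hS ^ n := by
  ext1 φ
  rw [Module.End.pow_apply]
  exact (φ.compMeasurePreserving_iterate hS n).symm

theorem koopman_const (hπ : MeasurePreserving π η ν) (α : A) :
    koopman hπ (AEEqFun.const Y α) = AEEqFun.const Z α := rfl

theorem koopman_koopman_of_semiconj (hπ : MeasurePreserving π η ν) (hS : MeasurePreserving S ν ν)
    (hR : MeasurePreserving R η η) (hc : Function.Semiconj π R S) (φ : Y →ₘ[ν] A) :
    koopman hR (koopman hπ φ) = koopman hπ (koopman hS φ) := by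
  induction φ using AEEqFun.induction_on with | _ f hf
  exact AEEqFun.mk_eq_mk.2 (.of_forall fun z => congrArg f (hc z))

end Koopman

section PhasePolynomials

variable {Y Z A : Type*} [MeasurableSpace Y] [MeasurableSpace Z] {ν : Measure Y} {η : Measure Z}
  {π : Z → Y} {S : Y → Y} {R : Z → Z} [TopologicalSpace A] [AddCommGroup A]
  [IsTopologicalAddGroup A] {k : ℕ} {α β : A} {φ ψ : Y →ₘ[ν] A}

/-- `φ` is a phase polynomial of degree at most `k` along `S`, with leading coefficient `α`: its
`k`-th difference `(koopman hS - 1) ^ k φ` is the constant `α`. With values in `ℝ / 2πℤ` these are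
the arguments of the quasi-eigenfunctions in `E_k(S)`. -/
def IsPhasePolynomial (hS : MeasurePreserving S ν ν) (k : ℕ) (α : A) (φ : Y →ₘ[ν] A) : Prop :=
  ((koopman hS - 1) ^ k) φ = AEEqFun.const Y α

namespace IsPhasePolynomial

variable {hS : MeasurePreserving S ν ν}

theorem sub (hφ : IsPhasePolynomial hS k α φ) (hψ : IsPhasePolynomial hS k β ψ) :
    IsPhasePolynomial hS k (α - β) (φ - ψ) := by
  rw [IsPhasePolynomial, map_sub, hφ, hψ]
  rfl

theorem pullback (hφ : IsPhasePolynomial hS k α φ) (hπ : MeasurePreserving π η ν)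
    (hR : MeasurePreserving R η η) (hc : Function.Semiconj π R S) :
    IsPhasePolynomial hR k α (koopman hπ φ) := by
  have hcomm : (koopman hR - 1) ∘ₗ koopman hπ =
      koopman (A := A) hπ ∘ₗ (koopman hS - 1) := by
    ext1 φ
    simp [koopman_koopman_of_semiconj hπ hS hR hc]
  have hcomm_pow := Module.End.commute_pow_left_of_commute hcomm k
  rw [IsPhasePolynomial, ← LinearMap.comp_apply, hcomm_pow, LinearMap.comp_apply, hφ, koopman_const]

theorem iterate (hφ : IsPhasePolynomial hS k α φ) (n : ℕ) :
    IsPhasePolynomial (hS.iterate n) k (n ^ k • α) φ := by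
  rw [IsPhasePolynomial, koopman_iterate]
  exact sub_one_pow_apply_pow_sub_one_pow (k := 0) (j := k) (by rwa [zero_add])
    (koopman_const hS α) n

theorem koopman_iterate_sub (hφ : IsPhasePolynomial hS (k + 1) α φ) (n : ℕ) :
    IsPhasePolynomial hS k (n • α) (koopman (hS.iterate n) φ - φ) := by
  have hdiff := sub_one_pow_apply_pow_sub_one_pow hφ (koopman_const hS α) n
  rwa [pow_one, pow_one, ← koopman_iterate] at hdiff

theorem of_lt (hφ : IsPhasePolynomial hS k α φ) {l : ℕ} (hkl : k < l) :
    IsPhasePolynomial hS l 0 φ := by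
  obtain ⟨m, rfl⟩ := Nat.exists_eq_add_of_lt hkl
  rw [IsPhasePolynomial, show k + m + 1 = m + 1 + k by ring, pow_add, Module.End.mul_apply, hφ,
    pow_succ, Module.End.mul_apply, LinearMap.sub_apply, koopman_const, Module.End.one_apply,
    sub_self, map_zero]
  rfl

end IsPhasePolynomial

end PhasePolynomials

section PhaseIntegrals

open Real (Angle)

variable {Y Z : Type*} [MeasurableSpace Y] [MeasurableSpace Z] {ν : Measure Y} {η : Measure Z}
  {π : Z → Y}

/-- The integral of `e^{iφ}` for a phase `φ : Y →ₘ[ν] ℝ / 2πℤ`. -/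
noncomputable def phaseIntegral (φ : Y →ₘ[ν] Angle) : ℂ :=
  ∫ y, ((φ y).toCircle : ℂ) ∂ν

theorem continuous_coe_toCircle : Continuous fun θ : Angle => (θ.toCircle : ℂ) :=
  continuous_subtype_val.comp AddCircle.homeomorphCircle'.continuous

theorem aestronglyMeasurable_coe_toCircle (φ : Y →ₘ[ν] Angle) :
    AEStronglyMeasurable (fun y => ((φ y).toCircle : ℂ)) ν :=
  continuous_coe_toCircle.comp_aestronglyMeasurable φ.aestronglyMeasurable

theorem phaseIntegral_koopman (hπ : MeasurePreserving π η ν) (φ : Y →ₘ[ν] Angle) :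
    phaseIntegral (koopman hπ φ) = phaseIntegral φ := by
  have hae := φ.coeFn_compMeasurePreserving hπ
  calc phaseIntegral (koopman hπ φ) = ∫ z, ((φ (π z)).toCircle : ℂ) ∂η :=
        integral_congr_ae (hae.fun_comp fun θ => (θ.toCircle : ℂ))
    _ = ∫ y, ((φ y).toCircle : ℂ) ∂(η.map π) :=
        (integral_map hπ.aemeasurable (by
          rw [hπ.map_eq]; exact aestronglyMeasurable_coe_toCircle φ)).symm
    _ = phaseIntegral φ := by rw [hπ.map_eq, phaseIntegral]

theorem phaseIntegral_neg (φ : Y →ₘ[ν] Angle) :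
    phaseIntegral (-φ) = starRingEnd ℂ (phaseIntegral φ) := by
  rw [phaseIntegral, phaseIntegral, ← integral_conj]
  refine integral_congr_ae ?_
  filter_upwards [AEEqFun.coeFn_neg φ] with y hy
  rw [hy, Pi.neg_apply, Angle.toCircle_neg, Circle.coe_inv_eq_conj]

theorem phaseIntegral_const_add (α : Angle) (φ : Y →ₘ[ν] Angle) :
    phaseIntegral (AEEqFun.const Y α + φ) = α.toCircle * phaseIntegral φ := by
  rw [phaseIntegral, phaseIntegral, ← integral_const_mul]
  refine integral_congr_ae ?_
  filter_upwards [AEEqFun.coeFn_add (AEEqFun.const Y α) φ, AEEqFun.coeFn_const (μ := ν) Y α]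
    with y hadd hconst
  rw [hadd, Pi.add_apply, hconst, Function.const_apply, Angle.toCircle_add, Circle.coe_mul]

theorem phaseIntegral_zero [IsProbabilityMeasure ν] : phaseIntegral (0 : Y →ₘ[ν] Angle) = 1 := by
  calc phaseIntegral (0 : Y →ₘ[ν] Angle) = ∫ _, (1 : ℂ) ∂ν := by
        refine integral_congr_ae ?_
        filter_upwards [AEEqFun.coeFn_zero (μ := ν) (α := Y) (β := Angle)] with y hy
        rw [hy, Pi.zero_apply, Angle.toCircle_zero, Circle.coe_one]
    _ = 1 := by simp

theorem phaseIntegral_const [IsProbabilityMeasure ν] (α : Angle) :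
    phaseIntegral (AEEqFun.const Y α : Y →ₘ[ν] Angle) = α.toCircle := by
  rw [← add_zero (AEEqFun.const Y α), phaseIntegral_const_add, phaseIntegral_zero, mul_one]

end PhaseIntegrals

section PhaseVectors

open Real (Angle)

variable {Y Z : Type*} [MeasurableSpace Y] [MeasurableSpace Z] {ν : Measure Y} {η : Measure Z}
  [IsFiniteMeasure ν] {π : Z → Y}

theorem memLp_coe_toCircle (φ : Y →ₘ[ν] Angle) :
    MemLp (fun y => ((φ y).toCircle : ℂ)) 2 ν :=
  .of_bound (aestronglyMeasurable_coe_toCircle φ) 1 (.of_forall fun _ => (Circle.norm_coe _).le)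

/-- The function `e^{iφ}` of a phase `φ` as a vector of `L²`. -/
noncomputable def phaseLp (φ : Y →ₘ[ν] Angle) : Lp ℂ 2 ν :=
  (memLp_coe_toCircle φ).toLp

theorem coeFn_phaseLp (φ : Y →ₘ[ν] Angle) : phaseLp φ =ᵐ[ν] fun y => ((φ y).toCircle : ℂ) :=
  (memLp_coe_toCircle φ).coeFn_toLp

theorem inner_phaseLp (φ ψ : Y →ₘ[ν] Angle) :
    inner ℂ (phaseLp φ) (phaseLp ψ) = phaseIntegral (ψ - φ) := by
  rw [L2.inner_def]
  refine integral_congr_ae ?_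
  filter_upwards [coeFn_phaseLp φ, coeFn_phaseLp ψ, AEEqFun.coeFn_sub ψ φ] with y hφ hψ hsub
  rw [hφ, hψ, hsub, Pi.sub_apply, sub_eq_add_neg, Angle.toCircle_add, Angle.toCircle_neg,
    Circle.coe_mul, Circle.coe_inv_eq_conj, RCLike.inner_apply]

theorem compMeasurePreserving_phaseLp [IsFiniteMeasure η] (hπ : MeasurePreserving π η ν)
    (φ : Y →ₘ[ν] Angle) :
    Lp.compMeasurePreserving π hπ (phaseLp φ) = phaseLp (koopman hπ φ) := by
  rw [phaseLp, Lp.toLp_compMeasurePreserving]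
  exact (MemLp.toLp_eq_toLp_iff _ _).2
    ((φ.coeFn_compMeasurePreserving hπ).symm.fun_comp fun θ => (θ.toCircle : ℂ))

end PhaseVectors

section Vanishing

open Real (Angle)

variable {Y : Type*} [MeasurableSpace Y] {ν : Measure Y} [IsProbabilityMeasure ν] {S : Y → Y}
  {φ : Y →ₘ[ν] Angle} {k : ℕ} {α : Angle}

theorem orthonormal_phaseLp_koopman_iterate (hS : MeasurePreserving S ν ν)
    (h : ∀ n ≠ 0, phaseIntegral (koopman (hS.iterate n) φ - φ) = 0) :
    Orthonormal ℂ fun n => phaseLp (koopman (hS.iterate n) φ) := by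
  have hlt (i j : ℕ) (hij : i < j) :
      inner ℂ (phaseLp (koopman (hS.iterate i) φ)) (phaseLp (koopman (hS.iterate j) φ)) = 0 := by
    obtain ⟨n, rfl⟩ := Nat.exists_eq_add_of_lt hij
    have hadd : koopman (hS.iterate (i + n + 1)) φ =
        koopman (hS.iterate i) (koopman (hS.iterate (n + 1)) φ) := by
      rw [koopman_iterate hS, koopman_iterate hS, koopman_iterate hS, add_assoc, pow_add,
        Module.End.mul_apply]
    rw [inner_phaseLp, hadd, ← map_sub, phaseIntegral_koopman, h _ n.succ_ne_zero]
  rw [orthonormal_iff_ite]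
  intro i j
  rcases lt_trichotomy i j with hij | rfl | hji
  · rw [hlt i j hij, if_neg hij.ne]
  · rw [inner_phaseLp, sub_self, phaseIntegral_zero, if_pos rfl]
  · rw [← inner_conj_symm, hlt j i hji, if_neg hji.ne', map_zero]

-- Bessel's inequality: every vector of this infinite orthonormal family has the same inner product
-- with the constant `1`.
theorem phaseIntegral_eq_zero_of_koopman_iterate_sub (hS : MeasurePreserving S ν ν)
    (h : ∀ n ≠ 0, phaseIntegral (koopman (hS.iterate n) φ - φ) = 0) : phaseIntegral φ = 0 := by
  have hsum := (orthonormal_phaseLp_koopman_iterate hS h).inner_products_summable (phaseLp 0)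
  have hinner (n : ℕ) :
      ‖inner ℂ (phaseLp (koopman (hS.iterate n) φ)) (phaseLp 0)‖ = ‖phaseIntegral φ‖ := by
    rw [inner_phaseLp, zero_sub, phaseIntegral_neg, RCLike.norm_conj, phaseIntegral_koopman]
  simpa only [hinner, summable_const_iff, sq_eq_zero_iff, norm_eq_zero] using hsum

theorem coe_toCircle_ne_one (hα : α ≠ 0) : (α.toCircle : ℂ) ≠ 1 := by
  intro h
  rw [← Real.Angle.arg_toCircle α, h] at hα
  simp at hα

theorem IsPhasePolynomial.phaseIntegral_eq_zero {hS : MeasurePreserving S ν ν}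
    (hφ : IsPhasePolynomial hS (k + 1) α φ) (hα : ¬IsOfFinAddOrder α) : phaseIntegral φ = 0 := by
  induction k generalizing α φ with
  | zero =>
    rw [IsPhasePolynomial, zero_add, pow_one, LinearMap.sub_apply, Module.End.one_apply,
      sub_eq_iff_eq_add] at hφ
    have hα0 : α ≠ 0 := fun h0 => hα (h0 ▸ .zero)
    have heq : phaseIntegral φ = α.toCircle * phaseIntegral φ := by
      rw [← phaseIntegral_const_add, ← hφ, phaseIntegral_koopman]
    by_contra h0
    exact coe_toCircle_ne_one hα0 ((right_eq_mul₀ h0).1 heq)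
  | succ k ih =>
    refine phaseIntegral_eq_zero_of_koopman_iterate_sub hS fun n hn => ?_
    refine ih (hφ.koopman_iterate_sub n) ?_
    rwa [isOfFinAddOrder_nsmul, or_iff_left hn]

end Vanishing

section QuasiEigenfunctions

open Real (Angle)

variable {X : Type*} [MeasurableSpace X] {μ : Measure X} {T : X → X} {f : X → ℂ} {k : ℕ}
  {φ : X →ₘ[μ] Angle}

theorem exists_coe_toCircle_ae_eq (hf : AEStronglyMeasurable f μ) (hnorm : ∀ᵐ x ∂μ, ‖f x‖ = 1) :
    ∃ φ : X →ₘ[μ] Angle, ∀ᵐ x ∂μ, ((φ x).toCircle : ℂ) = f x := by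
  have harg : AEStronglyMeasurable (fun x => (Complex.arg (f x) : Angle)) μ :=
    Angle.continuous_coe.comp_aestronglyMeasurable
      (Complex.measurable_arg.comp_aemeasurable hf.aemeasurable).aestronglyMeasurable
  refine ⟨AEEqFun.mk _ harg, ?_⟩
  filter_upwards [AEEqFun.coeFn_mk _ harg, hnorm] with x hx hx1
  rw [hx, Angle.toCircle_coe, Circle.coe_exp]
  simpa only [hx1, Complex.ofReal_one, one_mul] using Complex.norm_mul_exp_arg_mul_I (f x)

theorem exists_isPhasePolynomial_of_mem_quasiEigenfunctions (hT : MeasurePreserving T μ μ)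
    (hf : f ∈ quasiEigenfunctions T μ k) (hφ : ∀ᵐ x ∂μ, ((φ x).toCircle : ℂ) = f x) :
    ∃ α, IsPhasePolynomial hT k α φ := by
  induction k generalizing f φ with
  | zero =>
    obtain ⟨c, -, -, rfl⟩ := hf
    refine ⟨(c.arg : Angle), AEEqFun.ext ?_⟩
    filter_upwards [hφ, AEEqFun.coeFn_const (μ := μ) X (c.arg : Angle)] with x hx hconst
    rw [hconst, Function.const_apply, ← hx, Angle.arg_toCircle]
    rfl
  | succ k ih =>
    refine (ih (φ := koopman hT φ - φ) hf.2.2 ?_).imp fun α hα => ?_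
    · filter_upwards [AEEqFun.coeFn_sub (koopman hT φ) φ, φ.coeFn_compMeasurePreserving hT, hφ,
        hT.quasiMeasurePreserving.ae hφ] with x hsub hkoop hx hTx
      rw [hsub, Pi.sub_apply, ← hx, ← hTx, sub_eq_add_neg, Angle.toCircle_add, Angle.toCircle_neg,
        Circle.coe_mul, Circle.coe_inv, div_eq_mul_inv, ← Function.comp_apply (f := φ), ← hkoop]
      rfl
    · rw [IsPhasePolynomial, pow_succ, Module.End.mul_apply]
      exact hα

theorem norm_eq_one_of_mem_quasiEigenfunctions (hf : f ∈ quasiEigenfunctions T μ k) :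
    ∀ᵐ x ∂μ, ‖f x‖ = 1 := by
  cases k with
  | zero =>
    obtain ⟨c, hc, -, rfl⟩ := hf
    exact .of_forall fun _ => hc
  | succ k => exact hf.2.1

theorem exists_phaseLp_eq [IsFiniteMeasure μ] (hT : MeasurePreserving T μ μ) {u : Lp ℂ 2 μ}
    (hf : f ∈ quasiEigenfunctions T μ k) (hu : u =ᵐ[μ] f) :
    ∃ φ α, IsPhasePolynomial hT k α φ ∧ phaseLp φ = u := by
  obtain ⟨φ, hφ⟩ := exists_coe_toCircle_ae_eq ((Lp.aestronglyMeasurable u).congr hu)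
    (norm_eq_one_of_mem_quasiEigenfunctions hf)
  obtain ⟨α, hα⟩ := exists_isPhasePolynomial_of_mem_quasiEigenfunctions hT hf hφ
  exact ⟨φ, α, hα, Lp.ext ((coeFn_phaseLp φ).trans (EventuallyEq.trans hφ hu.symm))⟩

end QuasiEigenfunctions

section Dichotomy

variable {X A : Type*} [MeasurableSpace X] {μ : Measure X} {T : X → X} [TopologicalSpace A]
  [AddCommGroup A] [IsTopologicalAddGroup A] [TopologicalSpace.MetrizableSpace A] {k : ℕ} {α : A}
  {φ : X →ₘ[μ] A}

theorem TotallyErgodic.measurePreserving (h : TotallyErgodic T μ) : MeasurePreserving T μ μ :=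
  (h 1 one_ne_zero).toMeasurePreserving

theorem IsPhasePolynomial.eq_const_or_exists_not_isOfFinAddOrder (h : TotallyErgodic T μ)
    (hφ : IsPhasePolynomial h.measurePreserving k α φ) :
    (∃ c, φ = AEEqFun.const X c) ∨
      ∃ j β, IsPhasePolynomial h.measurePreserving (j + 1) β φ ∧ ¬IsOfFinAddOrder β := by
  induction k generalizing α with
  | zero => exact .inl ⟨α, hφ⟩
  | succ k ih =>
    by_cases hα : IsOfFinAddOrder α
    · obtain ⟨n, hn, hnα⟩ := isOfFinAddOrder_iff_nsmul_eq_zero.1 hα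
      have hpow : IsPhasePolynomial h.measurePreserving (0 + 1) α
          (((koopman h.measurePreserving - 1) ^ k) φ) := by
        rw [IsPhasePolynomial, ← Module.End.mul_apply, ← pow_add, zero_add, add_comm 1 k]
        exact hφ
      have hinv := hpow.koopman_iterate_sub n
      rw [IsPhasePolynomial, hnα, pow_zero, Module.End.one_apply] at hinv
      obtain ⟨c, hc⟩ :=
        (h n hn.ne').eq_const_of_compMeasurePreserving_eq (sub_eq_zero.1 hinv)
      exact ih hc
    · exact .inr ⟨k, α, hφ, hα⟩

end Dichotomy

section WeakConvergence

variable {ι 𝕜 E F : Type*} {l : Filter ι} {C : ℝ}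

theorem tendsto_apply_of_dense_span [NontriviallyNormedField 𝕜] [SeminormedAddCommGroup E]
    [NormedSpace 𝕜 E] [SeminormedAddCommGroup F] [NormedSpace 𝕜 F] {s : Set E}
    {A : ι → E →L[𝕜] F} {B : E →L[𝕜] F} (hA : ∀ i, ‖A i‖ ≤ C)
    (hs : Dense (Submodule.span 𝕜 s : Set E))
    (h : ∀ u ∈ s, Tendsto (fun i => A i u) l (nhds (B u))) (u : E) :
    Tendsto (fun i => A i u) l (nhds (B u)) := by
  have hequi_iff : Equicontinuous (fun i => ⇑(A i)) ↔ ∃ C, ∀ i, ‖A i‖ ≤ C :=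
    (NormedSpace.equicontinuous_TFAE A).out 1 5
  have hclosed := (hequi_iff.2 ⟨C, hA⟩).isClosed_setOfPred_tendsto (l := l) B.continuous
  refine hclosed.closure_subset_iff.2 (fun v hv => ?_) (hs u)
  induction hv using Submodule.span_induction with
  | mem v hv => exact h v hv
  | zero => simpa using! tendsto_const_nhds
  | add v w _ _ hv hw => simpa using! Tendsto.add hv hw
  | smul c v _ hv => simpa using! Tendsto.const_smul hv c

theorem tendsto_inner_apply_of_dense_span [RCLike 𝕜] [NormedAddCommGroup E] [NormedSpace 𝕜 E]
    [NormedAddCommGroup F] [InnerProductSpace 𝕜 F] {s : Set E} {t : Set F}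
    {A : ι → E →L[𝕜] F} {B : E →L[𝕜] F} (hA : ∀ i, ‖A i‖ ≤ C)
    (hs : Dense (Submodule.span 𝕜 s : Set E)) (ht : Dense (Submodule.span 𝕜 t : Set F))
    (h : ∀ u ∈ s, ∀ v ∈ t, Tendsto (fun i => inner 𝕜 v (A i u)) l (nhds (inner 𝕜 v (B u))))
    (u : E) (v : F) : Tendsto (fun i => inner 𝕜 v (A i u)) l (nhds (inner 𝕜 v (B u))) := by
  have hleft (v : F) (hv : v ∈ t) :
      Tendsto (fun i => inner 𝕜 v (A i u)) l (nhds (inner 𝕜 v (B u))) := by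
    refine tendsto_apply_of_dense_span (A := fun i => innerSL 𝕜 v ∘L A i)
      (B := innerSL 𝕜 v ∘L B) (C := ‖v‖ * C) (fun i => ?_) hs (h · · v hv) u
    calc ‖innerSL 𝕜 v ∘L A i‖ ≤ ‖innerSL 𝕜 v‖ * ‖A i‖ := ContinuousLinearMap.opNorm_comp_le _ _
      _ ≤ ‖v‖ * C := by rw [innerSL_apply_norm]; gcongr; exact hA i
  have hright : Tendsto (fun i => inner 𝕜 (A i u) v) l (nhds (inner 𝕜 (B u) v)) := by
    refine tendsto_apply_of_dense_span (A := fun i => innerSL 𝕜 (A i u))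
      (B := innerSL 𝕜 (B u)) (C := C * ‖u‖) (fun i => ?_) ht (fun v hv => ?_) v
    · rw [innerSL_apply_norm]
      exact (A i).le_of_opNorm_le (hA i) u
    · simpa only [Function.comp_def, innerSL_apply_apply, RCLike.star_def, inner_conj_symm] using
        (RCLike.continuous_conj.tendsto _).comp (hleft v hv)
  simpa only [Function.comp_def, inner_conj_symm] using
    (RCLike.continuous_conj.tendsto _).comp hright

end WeakConvergence

section CouplingOperator

variable {X Y Z : Type*} [MeasurableSpace X] [MeasurableSpace Y] [MeasurableSpace Z]
  {μ : Measure X} {ν : Measure Y} {η : Measure Z} {π₁ : Z → X} {π₂ : Z → Y}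

/-- The Markov operator `L²(μ) → L²(ν)` of a coupling `η` of `μ` and `ν`: the composition with `π₁`
followed by the conditional expectation along `π₂`, here the adjoint of the composition. -/
noncomputable def couplingOp (h₁ : MeasurePreserving π₁ η μ) (h₂ : MeasurePreserving π₂ η ν) :
    Lp ℂ 2 μ →L[ℂ] Lp ℂ 2 ν :=
  ContinuousLinearMap.adjoint
      (Lp.compMeasurePreservingₗᵢ ℂ π₂ h₂ : Lp ℂ 2 ν →ₗᵢ[ℂ] Lp ℂ 2 η).toContinuousLinearMap ∘L
    (Lp.compMeasurePreservingₗᵢ ℂ π₁ h₁).toContinuousLinearMap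

variable (h₁ : MeasurePreserving π₁ η μ) (h₂ : MeasurePreserving π₂ η ν)

theorem norm_couplingOp_le : ‖couplingOp h₁ h₂‖ ≤ 1 := by
  refine (ContinuousLinearMap.opNorm_comp_le _ _).trans ?_
  rw [LinearIsometryEquiv.norm_map]
  exact mul_le_one₀ (LinearIsometry.norm_toContinuousLinearMap_le _) (norm_nonneg _)
    (LinearIsometry.norm_toContinuousLinearMap_le _)

theorem inner_couplingOp (u : Lp ℂ 2 μ) (v : Lp ℂ 2 ν) :
    inner ℂ v (couplingOp h₁ h₂ u) =
      inner ℂ (Lp.compMeasurePreserving π₂ h₂ v) (Lp.compMeasurePreserving π₁ h₁ u) := by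
  rw [couplingOp, ContinuousLinearMap.comp_apply, ContinuousLinearMap.adjoint_inner_right]
  rfl

theorem inner_toLp_couplingOp_toLp {f : X → ℂ} {g : Y → ℂ} (hf : MemLp f 2 μ) (hg : MemLp g 2 ν) :
    inner ℂ hg.toLp (couplingOp h₁ h₂ hf.toLp) =
      ∫ z, f (π₁ z) * starRingEnd ℂ (g (π₂ z)) ∂η := by
  rw [inner_couplingOp, Lp.toLp_compMeasurePreserving, Lp.toLp_compMeasurePreserving, L2.inner_def]
  refine integral_congr_ae ?_
  filter_upwards [(hf.comp_measurePreserving h₁).coeFn_toLp,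
    (hg.comp_measurePreserving h₂).coeFn_toLp] with z hfz hgz
  rw [hfz, hgz, RCLike.inner_apply, Function.comp_apply, Function.comp_apply]

theorem inner_phaseLp_couplingOp_phaseLp [IsFiniteMeasure μ] [IsFiniteMeasure ν]
    [IsFiniteMeasure η] (φ : X →ₘ[μ] Real.Angle) (ψ : Y →ₘ[ν] Real.Angle) :
    inner ℂ (phaseLp ψ) (couplingOp h₁ h₂ (phaseLp φ)) =
      phaseIntegral (koopman h₁ φ - koopman h₂ ψ) := by
  rw [inner_couplingOp, compMeasurePreserving_phaseLp, compMeasurePreserving_phaseLp, inner_phaseLp]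

theorem inner_toLp_couplingOp_prod_toLp [IsProbabilityMeasure μ] [IsProbabilityMeasure ν]
    {f : X → ℂ} {g : Y → ℂ} (hf : MemLp f 2 μ) (hg : MemLp g 2 ν) :
    inner ℂ hg.toLp (couplingOp measurePreserving_fst measurePreserving_snd hf.toLp) =
      (∫ x, f x ∂μ) * starRingEnd ℂ (∫ y, g y ∂ν) := by
  rw [inner_toLp_couplingOp_toLp, integral_prod_mul f fun y => starRingEnd ℂ (g y), integral_conj]

end CouplingOperator

section CoprimePowerJoinings

open Real (Angle)

variable {X : Type*} [MeasurableSpace X] {μ : Measure X} {T : X → X}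

/-- A joining of two coprime powers `T^[r]` and `T^[s]` of `T`. Bundling the powers with the measure
lets limits along `r` and `s` be uniform over the joinings. -/
structure CoprimePowerJoining (T : X → X) (μ : Measure X) where
  r : ℕ
  s : ℕ
  coprime : r.Coprime s
  κ : Measure (X × X)
  fst : MeasurePreserving Prod.fst κ μ
  snd : MeasurePreserving Prod.snd κ μ
  invariant : MeasurePreserving (Prod.map T^[r] T^[s]) κ κ

namespace CoprimePowerJoining

/-- The filter on joinings of coprime powers generated by discarding finitely many pairs of
powers. -/
def atLargePowers (T : X → X) (μ : Measure X) : Filter (CoprimePowerJoining T μ) :=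
  comap (fun J => (J.r, J.s)) cofinite

theorem isPhasePolynomial_sub {A : Type*} [TopologicalSpace A] [AddCommGroup A]
    [IsTopologicalAddGroup A] {k : ℕ} {φ ψ : X →ₘ[μ] A} {α β : A} (J : CoprimePowerJoining T μ)
    {hT : MeasurePreserving T μ μ} (hφ : IsPhasePolynomial hT k α φ)
    (hψ : IsPhasePolynomial hT k β ψ) :
    IsPhasePolynomial J.invariant k (J.r ^ k • α - J.s ^ k • β)
      (koopman J.fst φ - koopman J.snd ψ) :=
  ((hφ.iterate J.r).pullback J.fst J.invariant fun _ => rfl).sub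
    ((hψ.iterate J.s).pullback J.snd J.invariant fun _ => rfl)

variable [IsProbabilityMeasure μ] {k : ℕ} {φ ψ : X →ₘ[μ] Angle} {α β : Angle}

instance (J : CoprimePowerJoining T μ) : IsProbabilityMeasure J.κ := by
  rw [← Measure.isProbabilityMeasure_map_iff J.fst.aemeasurable, J.fst.map_eq]
  infer_instance

theorem eventually_phaseIntegral_eq_zero {hT : MeasurePreserving T μ μ}
    (hφ : IsPhasePolynomial hT (k + 1) α φ) (hψ : IsPhasePolynomial hT (k + 1) β ψ)
    (hαβ : ¬(IsOfFinAddOrder α ∧ IsOfFinAddOrder β)) :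
    ∀ᶠ J in atLargePowers T μ, phaseIntegral (koopman J.fst φ - koopman J.snd ψ) = 0 := by
  have htorsion (J : CoprimePowerJoining T μ)
      (hJ : phaseIntegral (koopman J.fst φ - koopman J.snd ψ) ≠ 0) :
      IsOfFinAddOrder (J.r ^ (k + 1) • α - J.s ^ (k + 1) • β) :=
    not_not.1 (mt (J.isPhasePolynomial_sub hφ hψ).phaseIntegral_eq_zero hJ)
  refine eventually_comap.2 (Set.Subsingleton.finite ?_)
  intro p hp p' hp'
  simp only [Set.mem_compl_iff, Set.mem_ofPred_eq, not_forall] at hp hp'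
  obtain ⟨J, rfl, hJ⟩ := hp
  obtain ⟨J', rfl, hJ'⟩ := hp'
  exact Prod.ext_iff.2 (eq_of_isOfFinAddOrder_pow_smul_sub hαβ k.succ_ne_zero J.coprime J'.coprime
    (htorsion J hJ) (htorsion J' hJ'))

theorem eventually_phaseIntegral_eq_mul (h : TotallyErgodic T μ) {m n : ℕ}
    (hφ : IsPhasePolynomial h.measurePreserving m α φ)
    (hψ : IsPhasePolynomial h.measurePreserving n β ψ) :
    ∀ᶠ J in atLargePowers T μ, phaseIntegral (koopman J.fst φ - koopman J.snd ψ) =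
      phaseIntegral φ * starRingEnd ℂ (phaseIntegral ψ) := by
  rcases hφ.eq_const_or_exists_not_isOfFinAddOrder h with ⟨c, rfl⟩ | ⟨i, α', hφ', hα'⟩
  · refine .of_forall fun J => ?_
    rw [koopman_const, sub_eq_add_neg, phaseIntegral_const_add, phaseIntegral_neg,
      phaseIntegral_koopman, phaseIntegral_const]
  rcases hψ.eq_const_or_exists_not_isOfFinAddOrder h with ⟨c, rfl⟩ | ⟨j, β', hψ', hβ'⟩
  · refine .of_forall fun J => ?_
    rw [← neg_sub, phaseIntegral_neg, koopman_const, sub_eq_add_neg, phaseIntegral_const_add,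
      phaseIntegral_neg, phaseIntegral_koopman, phaseIntegral_const, map_mul, Complex.conj_conj,
      mul_comm]
  rw [hφ'.phaseIntegral_eq_zero hα', zero_mul]
  rcases lt_trichotomy i j with hij | rfl | hji
  · exact eventually_phaseIntegral_eq_zero (hφ'.of_lt (Nat.succ_lt_succ hij)) hψ'
      fun htors => hβ' htors.2
  · exact eventually_phaseIntegral_eq_zero hφ' hψ' fun htors => hα' htors.1
  · exact eventually_phaseIntegral_eq_zero hφ' (hψ'.of_lt (Nat.succ_lt_succ hji))
      fun htors => hα' htors.1

theorem tendsto_inner_couplingOp (h : QuasiDiscreteSpectrum T μ) (u v : Lp ℂ 2 μ) :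
    Tendsto (fun J : CoprimePowerJoining T μ => inner ℂ v (couplingOp J.fst J.snd u))
      (atLargePowers T μ)
      (nhds (inner ℂ v (couplingOp (measurePreserving_fst (ν := μ)) measurePreserving_snd u))) := by
  refine tendsto_inner_apply_of_dense_span (fun J => norm_couplingOp_le J.fst J.snd) h.2 h.2 ?_ u v
  rintro u ⟨m, f, hf, hu⟩ v ⟨n, g, hg, hv⟩
  obtain ⟨φ, α, hφ, rfl⟩ := exists_phaseLp_eq h.1.measurePreserving hf hu
  obtain ⟨ψ, β, hψ, rfl⟩ := exists_phaseLp_eq h.1.measurePreserving hg hv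
  refine tendsto_nhds_of_eventually_eq ?_
  filter_upwards [eventually_phaseIntegral_eq_mul h.1 hφ hψ] with J hJ
  rw [inner_phaseLp_couplingOp_phaseLp, hJ]
  exact (inner_toLp_couplingOp_prod_toLp (memLp_coe_toCircle φ) (memLp_coe_toCircle ψ)).symm

end CoprimePowerJoining

end CoprimePowerJoinings

theorem aop_of_quasiDiscreteSpectrum_general {X : Type*} [MeasurableSpace X] {μ : Measure X}
    [IsProbabilityMeasure μ] {T : X → X} (h : QuasiDiscreteSpectrum T μ) {f g : X → ℂ}
    (hf : MemLp f 2 μ) (hg : MemLp g 2 μ) {ε : ℝ} (hε : 0 < ε) :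
    ∀ᶠ p : ℕ × ℕ in cofinite, p.1.Coprime p.2 → ∀ κ : Measure (X × X),
      MeasurePreserving Prod.fst κ μ → MeasurePreserving Prod.snd κ μ →
      MeasurePreserving (Prod.map T^[p.1] T^[p.2]) κ κ →
      ‖∫ z, f z.1 * starRingEnd ℂ (g z.2) ∂κ -
        (∫ x, f x ∂μ) * starRingEnd ℂ (∫ x, g x ∂μ)‖ ≤ ε := by
  have hlim := CoprimePowerJoining.tendsto_inner_couplingOp h hf.toLp hg.toLp
  rw [inner_toLp_couplingOp_prod_toLp] at hlim
  simp only [inner_toLp_couplingOp_toLp] at hlim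
  filter_upwards [eventually_comap.1 (Metric.tendsto_nhds.1 hlim ε hε)]
    with p hp hcoprime κ hfst hsnd hκ
  rw [← dist_eq_norm]
  exact (hp ⟨p.1, p.2, hcoprime, κ, hfst, hsnd, hκ⟩ rfl).le

/-- **Theorem 3.6.** Every automorphism of a standard Borel probability space with
quasi-discrete spectrum has the AOP property. -/
theorem aop_of_quasiDiscreteSpectrum
    {X : Type*} [MeasurableSpace X] [StandardBorelSpace X]
    (μ : Measure X) [IsProbabilityMeasure μ] (T : X ≃ᵐ X)
    (hT : MeasurePreserving T μ μ)
    (hqds : QuasiDiscreteSpectrum (⇑T) μ) :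
    AOP (⇑T) μ := by
  intro f g hf hg hf0 _ ε hε
  obtain ⟨N, hN⟩ := eventually_atTop_prod_self'.1
    (atTop_le_cofinite (aop_of_quasiDiscreteSpectrum_general hqds hf hg hε))
  refine ⟨N, fun r s hr hs hne hNr hNs κ _ hfst hsnd hκ => ?_⟩
  have hbound := hN r hNr s hNs ((Nat.coprime_primes hr hs).2 hne) κ ⟨measurable_fst, hfst⟩
    ⟨measurable_snd, hsnd⟩ hκ.toMeasurePreserving
  rwa [hf0, zero_mul, sub_zero] at hbound
end

section
/- Let X be a compact connected metrizable abelian topological group, A : X → X a continuous group automorphism, and b ∈ X, and define T : X → X by Tx = Ax + b. Assume that the subgroup generated by (A−I)X and b is dense in X, and that for every continuous character χ of X there exists m ≥ 0 with χ∘(A−I)^m = 1. Let u : ℕ → ℂ be multiplicative with |u(n)| ≤ 1 for all n. Then for every continuous character χ ≠ 1 of X, every increasing sequence 1 = b₁ < b₂ < ⋯ of integers with b_{k+1} − b_k → ∞, and every sequence (z_k) of points of X, one has (1/b_{K+1}) Σ_{k ≤ K} | Σ_{b_k+1 ≤ n < b_{k+1}} χ(Tⁿ z_k) u(n) | → 0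 as K → ∞. -/
open MeasureTheory Filter

/-!
Let `N = A - I` and let `m` be maximal with `χ ∘ N^m ≠ 1`. Along an orbit of `T` the value of `χ` is
a polynomial phase of degree `m + 1` whose `(m + 1)`-st difference is the constant `w = χ (N^m b)`.
The character `χ ∘ N^m` kills `N X`; if `w` were a root of unity, then by density `χ ∘ N^m` would
take finitely many values, hence be trivial as `X` is connected. So `w` has infinite order.

Rotating each block by a unimodular constant removes the absolute values and leaves the correlation
of `u` with one bounded sequence `f`, equal to such a polynomial phase on every block. By Kátai's
criterion, a consequence of the Turán–Kubilius inequality and Cauchy–Schwarz, it is enough that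
`m ↦ f (p m) * conj (f (q m))` has mean zero for all primes `p ≠ q`. Away from a set of density zero
coming from the breakpoints, this product is again a polynomial phase, and its leading constant
`w ^ p ^ (m + 1) / w ^ q ^ (m + 1)` has infinite order. Weyl's theorem, uniform over all such phases
by van der Corput's inequality, bounds its sums over the intervals between breakpoints.
-/

section

open Finset Asymptotics
open scoped ComplexConjugate

/-! ### Polynomial sequences in an abelian group -/

/-- `f` is a polynomial sequence of degree at most `d` in the multiplicative group `G`: its `d`-th
difference `n ↦ f (n + 1) / f n` is the constant `w`, the analogue of `d!` times the leading
coefficient. -/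
def IsPolySeq {G : Type*} [CommGroup G] : ℕ → G → (ℕ → G) → Prop
  | 0, w, f => ∀ n, f n = w
  | d + 1, w, f => IsPolySeq d w fun n => f (n + 1) / f n

namespace IsPolySeq

variable {G : Type*} [CommGroup G] {d : ℕ} {v w : G} {f g : ℕ → G}

lemma mul (hf : IsPolySeq d v f) (hg : IsPolySeq d w g) :
    IsPolySeq d (v * w) fun n => f n * g n := by
  induction d generalizing f g with
  | zero => exact fun n => congrArg₂ _ (hf n) (hg n)
  | succ d ih => simpa only [IsPolySeq, mul_div_mul_comm] using ih hf hg

lemma inv (hf : IsPolySeq d w f) : IsPolySeq d w⁻¹ fun n => (f n)⁻¹ := by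
  induction d generalizing f with
  | zero => exact fun n => congrArg _ (hf n)
  | succ d ih => simpa only [IsPolySeq, inv_div_inv, inv_div] using ih hf

lemma div (hf : IsPolySeq d v f) (hg : IsPolySeq d w g) :
    IsPolySeq d (v / w) fun n => f n / g n := by
  simpa only [div_eq_mul_inv] using hf.mul hg.inv

lemma shift (hf : IsPolySeq d w f) (a : ℕ) : IsPolySeq d w fun n => f (n + a) := by
  induction d generalizing f with
  | zero => exact fun n => hf _
  | succ d ih => simpa only [IsPolySeq, add_right_comm] using ih hf

lemma one (d : ℕ) : IsPolySeq d (1 : G) fun _ => 1 := by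
  induction d with
  | zero => exact fun _ => rfl
  | succ d ih => simpa only [IsPolySeq, div_one] using ih

lemma const (d : ℕ) (c : G) : IsPolySeq (d + 1) 1 fun _ => c := by
  simpa only [IsPolySeq, div_self'] using one d

lemma shift_div (hf : IsPolySeq (d + 1) w f) (h : ℕ) :
    IsPolySeq d (w ^ h) fun n => f (n + h) / f n := by
  induction h with
  | zero => simpa using one (G := G) d
  | succ h ih =>
    have hstep : IsPolySeq d w fun n => f (n + h + 1) / f (n + h) :=
      shift (f := fun n => f (n + 1) / f n) hf h
    simpa only [pow_succ', div_mul_div_cancel, add_assoc] using hstep.mul ih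

lemma shift_div_shift (hf : IsPolySeq (d + 1) w f) (i j : ℕ) :
    IsPolySeq d (w ^ i / w ^ j) fun n => f (n + i) / f (n + j) := by
  simpa only [div_div_div_cancel_right] using (hf.shift_div i).div (hf.shift_div j)

lemma dilate (hf : IsPolySeq d w f) (p : ℕ) : IsPolySeq d (w ^ p ^ d) fun n => f (p * n) := by
  induction d generalizing f w with
  | zero => exact fun n => by simpa using hf _
  | succ d ih =>
    simpa only [IsPolySeq, ← pow_mul, ← pow_succ', mul_add_one] using ih (hf.shift_div p)

lemma eq_mul_pow (hf : IsPolySeq 1 w f) (n : ℕ) : f n = f 0 * w ^ n := by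
  induction n with
  | zero => simp
  | succ n ih => rw [pow_succ, ← mul_assoc, ← ih, ← div_eq_iff_eq_mul']; exact hf n

end IsPolySeq

lemma not_isOfFinOrder_pow_div_pow {G : Type*} [CommGroup G] {w : G} (hw : ¬IsOfFinOrder w)
    {i j : ℕ} (hij : i ≠ j) : ¬IsOfFinOrder (w ^ i / w ^ j) := by
  rw [isOfFinOrder_iff_pow_eq_one]
  rintro ⟨n, hn, hwn⟩
  rw [div_pow, div_eq_one, ← pow_mul, ← pow_mul] at hwn
  exact hij (Nat.eq_of_mul_eq_mul_right hn (injective_pow_iff_not_isOfFinOrder.2 hw hwn))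

/-! ### Van der Corput's inequality -/

lemma sum_norm_sum_sq_le {ι κ : Type*} (s : Finset ι) (t : Finset κ) (a : ι → κ → ℂ) :
    ∑ n ∈ t, ‖∑ i ∈ s, a i n‖ ^ 2 ≤ ∑ i ∈ s, ∑ j ∈ s, ‖∑ n ∈ t, a i n * conj (a j n)‖ := by
  have hexpand : ((∑ n ∈ t, ‖∑ i ∈ s, a i n‖ ^ 2 : ℝ) : ℂ)
      = ∑ i ∈ s, ∑ j ∈ s, ∑ n ∈ t, a i n * conj (a j n) := by
    push_cast
    simp_rw [← Complex.mul_conj', map_sum, sum_mul_sum]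
    rw [sum_comm]
    exact sum_congr rfl fun i _ => sum_comm
  calc ∑ n ∈ t, ‖∑ i ∈ s, a i n‖ ^ 2
      ≤ ‖((∑ n ∈ t, ‖∑ i ∈ s, a i n‖ ^ 2 : ℝ) : ℂ)‖ := by
        rw [Complex.norm_real]; exact Real.le_norm_self _
    _ ≤ ∑ i ∈ s, ∑ j ∈ s, ‖∑ n ∈ t, a i n * conj (a j n)‖ := by
        rw [hexpand]; exact norm_sum_le_of_le _ fun i _ => norm_sum_le _ _

lemma sum_norm_sum_le_sqrt {ι κ : Type*} (s : Finset ι) (t : Finset κ) (a : ι → κ → ℂ) {E : ℝ}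
    (hE : 0 ≤ E)
    (hcorr : ∀ i ∈ s, ∀ j ∈ s, i ≠ j → ‖∑ n ∈ t, a i n * conj (a j n)‖ ≤ E) :
    ∑ n ∈ t, ‖∑ i ∈ s, a i n‖
      ≤ √(#t * (∑ i ∈ s, ∑ n ∈ t, ‖a i n‖ ^ 2 + (#s : ℝ) ^ 2 * E)) := by
  classical
  have hpair : ∀ i ∈ s, ∀ j ∈ s, ‖∑ n ∈ t, a i n * conj (a j n)‖
      ≤ (if i = j then ∑ n ∈ t, ‖a i n‖ ^ 2 else 0) + E := by
    intro i hi j hj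
    rcases eq_or_ne i j with rfl | hij
    · have hdiag : ‖∑ n ∈ t, a i n * conj (a i n)‖ ≤ ∑ n ∈ t, ‖a i n‖ ^ 2 :=
        norm_sum_le_of_le _ fun n _ => by simp [sq]
      simpa using hdiag.trans (le_add_of_nonneg_right hE)
    · simpa [hij] using hcorr i hi j hj hij
  apply Real.le_sqrt_of_sq_le
  calc (∑ n ∈ t, ‖∑ i ∈ s, a i n‖) ^ 2
      ≤ #t * ∑ n ∈ t, ‖∑ i ∈ s, a i n‖ ^ 2 := sq_sum_le_card_mul_sum_sq
    _ ≤ #t * ∑ i ∈ s, ∑ j ∈ s, ((if i = j then ∑ n ∈ t, ‖a i n‖ ^ 2 else 0) + E) := by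
        gcongr
        exact (sum_norm_sum_sq_le s t a).trans
          (sum_le_sum fun i hi => sum_le_sum fun j hj => hpair i hi j hj)
    _ = #t * (∑ i ∈ s, ∑ n ∈ t, ‖a i n‖ ^ 2 + (#s : ℝ) ^ 2 * E) := by
        simp +contextual [sum_add_distrib, sq, mul_assoc]

lemma norm_sum_range_sub_sum_range_shift_le {E : Type*} [SeminormedAddCommGroup E] {g : ℕ → E}
    (hg : ∀ n, ‖g n‖ ≤ 1) (N h : ℕ) :
    ‖∑ n ∈ range N, g n - ∑ n ∈ range N, g (n + h)‖ ≤ 2 * h := by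
  have hbound (a : ℕ) : ‖∑ n ∈ range h, g (a + n)‖ ≤ h :=
    (norm_sum_le_of_le _ fun n _ => hg (a + n)).trans (by simp)
  have hcancel : ∑ n ∈ range N, g n - ∑ n ∈ range N, g (n + h)
      = ∑ n ∈ range h, g (0 + n) - ∑ n ∈ range h, g (N + n) := by
    simp only [zero_add, add_comm _ h]
    rw [sub_eq_sub_iff_add_eq_add, ← sum_range_add, ← sum_range_add, add_comm]
  rw [hcancel, two_mul]
  exact (norm_sub_le _ _).trans (add_le_add (hbound 0) (hbound N))

lemma van_der_corput {f : ℕ → ℂ} (hf : ∀ n, ‖f n‖ ≤ 1) (N H : ℕ) {E : ℝ} (hE : 0 ≤ E)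
    (hcorr : ∀ i < H, ∀ j < H, i ≠ j →
      ‖∑ n ∈ range N, f (n + i) * conj (f (n + j))‖ ≤ E) :
    H * ‖∑ n ∈ range N, f n‖ ≤ √(N * (H * N + H ^ 2 * E)) + 2 * H ^ 2 := by
  have hshift : ‖∑ h ∈ range H, (∑ n ∈ range N, f n - ∑ n ∈ range N, f (n + h))‖
      ≤ 2 * (H : ℝ) ^ 2 := by
    calc ‖∑ h ∈ range H, (∑ n ∈ range N, f n - ∑ n ∈ range N, f (n + h))‖
        ≤ ∑ h ∈ range H, 2 * (H : ℝ) := norm_sum_le_of_le _ fun h hh =>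
          (norm_sum_range_sub_sum_range_shift_le hf N h).trans
            (by gcongr; exact (mem_range.1 hh).le)
      _ = 2 * (H : ℝ) ^ 2 := by simp only [sum_const, card_range, nsmul_eq_mul]; ring
  have hdiag : ∑ h ∈ range H, ∑ n ∈ range N, ‖f (n + h)‖ ^ 2 ≤ H * (N : ℝ) := by
    refine (sum_le_sum fun h _ => sum_le_sum fun n _ =>
      pow_le_one₀ (norm_nonneg _) (hf (n + h))).trans (by simp)
  have havg : ∑ n ∈ range N, ‖∑ h ∈ range H, f (n + h)‖ ≤ √(N * (H * N + H ^ 2 * E)) := by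
    refine (sum_norm_sum_le_sqrt (range H) (range N) (fun h n => f (n + h)) hE
      (by simpa using hcorr)).trans ?_
    simp only [card_range]
    gcongr
  calc H * ‖∑ n ∈ range N, f n‖
      = ‖∑ n ∈ range N, ∑ h ∈ range H, f (n + h)
          + ∑ h ∈ range H, (∑ n ∈ range N, f n - ∑ n ∈ range N, f (n + h))‖ := by
        rw [sum_comm, ← sum_add_distrib]; simp
    _ ≤ √(N * (H * N + H ^ 2 * E)) + 2 * H ^ 2 :=
        (norm_add_le _ _).trans (add_le_add ((norm_sum_le _ _).trans havg) hshift)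

lemma eventually_two_mul_sqrt_add_le (c : ℝ) {ε : ℝ} (hε : 0 < ε) :
    ∀ᶠ x : ℝ in atTop, 2 * √(x + 1) + c ≤ ε * x := by
  filter_upwards [eventually_ge_atTop ((2 * (ε / 2 + 2 / ε + c)) / ε), eventually_ge_atTop 0]
    with x hx hx0
  rw [div_le_iff₀ hε] at hx
  have hamgm : 2 * √(x + 1) ≤ ε / 2 * (x + 1) + 2 / ε := by
    have hsq : 0 ≤ (ε / 2 * √(x + 1) - 1) ^ 2 * (2 / ε) := by positivity
    have hexp : (ε / 2 * √(x + 1) - 1) ^ 2 * (2 / ε)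
        = ε / 2 * √(x + 1) ^ 2 + 2 / ε - 2 * √(x + 1) := by field_simp; ring
    rw [Real.sq_sqrt (by positivity)] at hexp
    linarith
  linarith

/-! ### Weyl's theorem, uniformly over polynomial phases -/

lemma norm_sum_range_pow_le {w : ℂ} (hw : ‖w‖ ≤ 1) (hw1 : w ≠ 1) (N : ℕ) :
    ‖∑ n ∈ range N, w ^ n‖ ≤ 2 / ‖w - 1‖ := by
  rw [geom_sum_eq hw1, norm_div, ← one_add_one_eq_two]
  gcongr
  exact (norm_sub_le _ _).trans
    (add_le_add (by simpa using pow_le_one₀ (norm_nonneg _) hw) (by simp))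

lemma coe_circle_div (v w : Circle) : ((v / w : Circle) : ℂ) = v * conj (w : ℂ) := by
  rw [Circle.coe_div, div_eq_mul_inv, ← Circle.coe_inv, Circle.coe_inv_eq_conj]

namespace IsPolySeq

variable {d : ℕ} {w : Circle}

lemma norm_sum_range_le_of_degree_one {f : ℕ → Circle} (hw : w ≠ 1) (hf : IsPolySeq 1 w f)
    (N : ℕ) : ‖∑ n ∈ range N, (f n : ℂ)‖ ≤ 2 / ‖(w : ℂ) - 1‖ := by
  calc ‖∑ n ∈ range N, (f n : ℂ)‖
      = ‖(f 0 : ℂ) * ∑ n ∈ range N, (w : ℂ) ^ n‖ := by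
        rw [mul_sum]
        exact congrArg norm <| sum_congr rfl fun n _ => by
          rw [hf.eq_mul_pow, Circle.coe_mul, Circle.coe_pow]
    _ ≤ 2 / ‖(w : ℂ) - 1‖ := by
        rw [norm_mul, Circle.norm_coe, one_mul]
        exact norm_sum_range_pow_le (Circle.norm_coe w).le (mt Circle.coe_eq_one.1 hw) N

-- Differencing lowers the degree, so van der Corput's inequality is the induction step.
theorem eventually_norm_sum_range_le (hw : ¬IsOfFinOrder w) {ε : ℝ} (hε : 0 < ε) :
    ∀ᶠ N : ℕ in atTop, ∀ f : ℕ → Circle, IsPolySeq (d + 1) w f →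
      ‖∑ n ∈ range N, (f n : ℂ)‖ ≤ ε * N := by
  induction d generalizing w ε with
  | zero =>
    have hw1 : w ≠ 1 := fun h => hw (h ▸ IsOfFinOrder.one)
    filter_upwards [(tendsto_natCast_atTop_atTop.const_mul_atTop hε).eventually_ge_atTop
      (2 / ‖(w : ℂ) - 1‖)] with N hN f hf
    exact (hf.norm_sum_range_le_of_degree_one hw1 N).trans hN
  | succ d ih =>
    obtain ⟨H, hH, hH0⟩ := ((tendsto_natCast_atTop_atTop.eventually
      (eventually_two_mul_sqrt_add_le 0 (half_pos hε))).and (eventually_gt_atTop 0)).exists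
    have hcorr : ∀ᶠ N : ℕ in atTop, ∀ i ∈ range H, ∀ j ∈ range H, i ≠ j →
        ∀ f : ℕ → Circle, IsPolySeq (d + 1) (w ^ i / w ^ j) f →
          ‖∑ n ∈ range N, (f n : ℂ)‖ ≤ 1 / (H : ℝ) ^ 2 * N := by
      simp only [Filter.eventually_all_finset, Filter.eventually_imp_distrib_left]
      exact fun i _ j _ hij => ih (not_isOfFinOrder_pow_div_pow hw hij) (by positivity)
    filter_upwards [hcorr, (tendsto_natCast_atTop_atTop.const_mul_atTop
      (half_pos hε)).eventually_ge_atTop (2 * (H : ℝ))] with N hN hN' f hf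
    have hvdc := van_der_corput (f := fun n => (f n : ℂ)) (fun n => (Circle.norm_coe _).le) N H
      (E := 1 / (H : ℝ) ^ 2 * N) (by positivity) fun i hi j hj hij => by
        simpa only [coe_circle_div] using
          hN i (mem_range.2 hi) j (mem_range.2 hj) hij _ (hf.shift_div_shift i j)
    have hsqrt : √(N * (H * N + H ^ 2 * (1 / (H : ℝ) ^ 2 * N))) = √(H + 1) * N := by
      rw [← Real.sqrt_sq (Nat.cast_nonneg N), ← Real.sqrt_mul (by positivity),
        Real.sqrt_sq (Nat.cast_nonneg N)]
      congr 1
      field_simp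
    rw [hsqrt] at hvdc
    have hHr : (0 : ℝ) < H := by exact_mod_cast hH0
    refine le_of_mul_le_mul_left (hvdc.trans ?_) hHr
    have hmain : √((H : ℝ) + 1) * N ≤ ε / 2 * H * N := by
      gcongr
      linarith [Real.sqrt_nonneg ((H : ℝ) + 1)]
    nlinarith

lemma exists_norm_sum_range_le (hw : ¬IsOfFinOrder w) {ε : ℝ} (hε : 0 < ε) :
    ∃ C : ℝ, ∀ f : ℕ → Circle, IsPolySeq (d + 1) w f → ∀ N : ℕ,
      ‖∑ n ∈ range N, (f n : ℂ)‖ ≤ ε * N + C := by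
  obtain ⟨C, hC⟩ := eventually_atTop.1 (eventually_norm_sum_range_le (d := d) hw hε)
  refine ⟨C, fun f hf N => ?_⟩
  rcases le_total C N with h | h
  · exact (hC N h f hf).trans (le_add_of_nonneg_right C.cast_nonneg)
  · have htriv : ‖∑ n ∈ range N, (f n : ℂ)‖ ≤ N :=
      (norm_sum_le_of_le _ fun n _ => (Circle.norm_coe (f n)).le).trans (by simp)
    have : (N : ℝ) ≤ C := by exact_mod_cast h
    linarith [show 0 ≤ ε * N by positivity]

end IsPolySeq

/-! ### The Turán–Kubilius inequality -/

lemma div_le_cast_ceilDiv {d : ℕ} (hd : 0 < d) (N : ℕ) : (N : ℝ) / d ≤ (N ⌈/⌉ d : ℕ) := by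
  rw [div_le_iff₀' (by exact_mod_cast hd)]
  exact_mod_cast le_smul_ceilDiv hd

lemma cast_ceilDiv_le_div_add_one (N d : ℕ) : ((N ⌈/⌉ d : ℕ) : ℝ) ≤ (N : ℝ) / d + 1 := by
  rcases d.eq_zero_or_pos with rfl | hd
  · simp
  rw [← sub_le_iff_le_add, le_div_iff₀ (by exact_mod_cast hd), sub_one_mul, sub_le_iff_le_add,
    Nat.ceilDiv_eq_add_pred_div]
  exact_mod_cast (Nat.div_mul_le_self _ _).trans (Nat.sub_le _ _)

lemma sum_range_ite_dvd {M : Type*} [AddCommMonoid M] {d : ℕ} (hd : 0 < d) (N : ℕ) (g : ℕ → M) :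
    ∑ n ∈ range N, (if d ∣ n then g n else 0) = ∑ m ∈ range (N ⌈/⌉ d), g (d * m) := by
  have hmultiples : {n ∈ range N | d ∣ n} = (range (N ⌈/⌉ d)).image (d * ·) := by
    have hlt (m : ℕ) : m < N ⌈/⌉ d ↔ d * m < N := by
      simpa using (ceilDiv_le_iff_le_smul (b := N) (c := m) hd).not
    ext n
    simp only [mem_filter, mem_range, mem_image, hlt]
    constructor
    · rintro ⟨hn, m, rfl⟩
      exact ⟨m, hn, rfl⟩
    · rintro ⟨m, hm, rfl⟩
      exact ⟨hm, dvd_mul_right d m⟩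
  rw [← sum_filter, hmultiples, sum_image fun _ _ _ _ h => Nat.eq_of_mul_eq_mul_left hd h]

lemma sum_range_mul_card_filter_dvd {R ι : Type*} [NonAssocSemiring R] {s : Finset ι} {d : ι → ℕ}
    (hd : ∀ i ∈ s, 0 < d i) (N : ℕ) (g : ℕ → R) :
    ∑ n ∈ range N, g n * #{i ∈ s | d i ∣ n}
      = ∑ i ∈ s, ∑ m ∈ range (N ⌈/⌉ d i), g (d i * m) := by
  simp_rw [← sum_boole, mul_sum, mul_ite, mul_one, mul_zero]
  rw [sum_comm]
  exact sum_congr rfl fun i hi => sum_range_ite_dvd (hd i hi) N g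

section TuranKubilius

variable {P : Finset ℕ}

lemma sum_inv_mul_le_sum_card_filter_dvd (hP : ∀ p ∈ P, 0 < p) (N : ℕ) :
    (∑ p ∈ P, (p : ℝ)⁻¹) * N ≤ ∑ n ∈ range N, (#{p ∈ P | p ∣ n} : ℝ) := by
  have hcount := sum_range_mul_card_filter_dvd (R := ℝ) (d := id) hP N 1
  simp only [Pi.one_apply, one_mul, id, sum_const, card_range, nsmul_one] at hcount
  rw [hcount, sum_mul]
  exact sum_le_sum fun p hp => by
    simpa only [inv_mul_eq_div] using div_le_cast_ceilDiv (hP p hp) N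

lemma sum_card_filter_dvd_sq_le (hP : ∀ p ∈ P, 0 < p) (hcop : (P : Set ℕ).Pairwise Nat.Coprime)
    (N : ℕ) :
    ∑ n ∈ range N, (#{p ∈ P | p ∣ n} : ℝ) ^ 2
      ≤ ((∑ p ∈ P, (p : ℝ)⁻¹) ^ 2 + ∑ p ∈ P, (p : ℝ)⁻¹) * N + (#P : ℝ) ^ 2 := by
  have hpairs (n : ℕ) :
      #{p ∈ P | p ∣ n} ^ 2 = #{x ∈ P ×ˢ P | x.1.lcm x.2 ∣ n} := by
    simp only [Nat.lcm_dvd_iff, sq, ← card_product, ← filter_product]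
  have hlcm : ∀ p ∈ P, ∀ q ∈ P,
      ((p.lcm q : ℕ) : ℝ)⁻¹ ≤ (p : ℝ)⁻¹ * (q : ℝ)⁻¹ + if p = q then (p : ℝ)⁻¹ else 0 := by
    intro p hp q hq
    rcases eq_or_ne p q with rfl | hpq
    · simpa [Nat.lcm_self] using mul_self_nonneg (p : ℝ)⁻¹
    · simp [(hcop hp hq hpq).lcm_eq_mul, hpq, mul_comm]
  have hcount := sum_range_mul_card_filter_dvd (R := ℝ) (s := P ×ˢ P) (d := fun x => x.1.lcm x.2)
    (fun x hx => Nat.lcm_pos (hP _ (mem_product.1 hx).1) (hP _ (mem_product.1 hx).2)) N 1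
  simp only [Pi.one_apply, one_mul, sum_const, card_range, nsmul_one] at hcount
  calc ∑ n ∈ range N, (#{p ∈ P | p ∣ n} : ℝ) ^ 2
      = ∑ x ∈ P ×ˢ P, ((N ⌈/⌉ x.1.lcm x.2 : ℕ) : ℝ) := by
        rw [← hcount]; exact_mod_cast sum_congr rfl fun n _ => hpairs n
    _ ≤ ∑ x ∈ P ×ˢ P, (((x.1 : ℝ)⁻¹ * (x.2 : ℝ)⁻¹ + if x.1 = x.2 then (x.1 : ℝ)⁻¹ else 0) * N
          + 1) := by
        refine sum_le_sum fun x hx => (cast_ceilDiv_le_div_add_one _ _).trans ?_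
        rw [← inv_mul_eq_div]
        gcongr
        exact hlcm _ (mem_product.1 hx).1 _ (mem_product.1 hx).2
    _ = ((∑ p ∈ P, (p : ℝ)⁻¹) ^ 2 + ∑ p ∈ P, (p : ℝ)⁻¹) * N + (#P : ℝ) ^ 2 := by
        rw [sum_add_distrib, ← sum_mul, sum_add_distrib, sq (∑ p ∈ P, _), sum_mul_sum,
          sum_product, sum_product]
        simp [sq]

theorem turan_kubilius (hP : ∀ p ∈ P, 0 < p) (hcop : (P : Set ℕ).Pairwise Nat.Coprime) (N : ℕ) :
    ∑ n ∈ range N, ((#{p ∈ P | p ∣ n} : ℝ) - ∑ p ∈ P, (p : ℝ)⁻¹) ^ 2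
      ≤ (∑ p ∈ P, (p : ℝ)⁻¹) * N + (#P : ℝ) ^ 2 := by
  have hfirst := sum_inv_mul_le_sum_card_filter_dvd hP N
  have hsecond := sum_card_filter_dvd_sq_le hP hcop N
  set L := ∑ p ∈ P, (p : ℝ)⁻¹
  have hexpand : ∑ n ∈ range N, ((#{p ∈ P | p ∣ n} : ℝ) - L) ^ 2
      = ∑ n ∈ range N, (#{p ∈ P | p ∣ n} : ℝ) ^ 2
        - 2 * L * ∑ n ∈ range N, (#{p ∈ P | p ∣ n} : ℝ) + L ^ 2 * N := by
    simp only [sub_sq, sum_add_distrib, sum_sub_distrib, mul_sum, sum_const, card_range,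
      nsmul_eq_mul, mul_comm, mul_left_comm, mul_assoc]
  have hL : 0 ≤ L := sum_nonneg fun _ _ => by positivity
  linarith [mul_le_mul_of_nonneg_left hfirst hL]

end TuranKubilius

/-! ### Kátai's orthogonality criterion -/

section Katai

variable {f u : ℕ → ℂ}

lemma norm_sum_mul_card_filter_dvd_sub_le {P : Finset ℕ} (hP : ∀ p ∈ P, 0 < p)
    (hcop : (P : Set ℕ).Pairwise Nat.Coprime) {g : ℕ → ℂ} (hg : ∀ n, ‖g n‖ ≤ 1) (N : ℕ) :
    ‖∑ n ∈ range N, g n * ((#{p ∈ P | p ∣ n} - ∑ p ∈ P, (p : ℝ)⁻¹ : ℝ) : ℂ)‖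
      ≤ √(N * ((∑ p ∈ P, (p : ℝ)⁻¹) * N + (#P : ℝ) ^ 2)) := by
  set L := ∑ p ∈ P, (p : ℝ)⁻¹
  calc ‖∑ n ∈ range N, g n * ((#{p ∈ P | p ∣ n} - L : ℝ) : ℂ)‖
      ≤ ∑ n ∈ range N, |(#{p ∈ P | p ∣ n} : ℝ) - L| := norm_sum_le_of_le _ fun n _ => by
        rw [norm_mul, Complex.norm_real]
        exact mul_le_of_le_one_left (norm_nonneg _) (hg n)
    _ ≤ √(N * (L * N + (#P : ℝ) ^ 2)) := by
        refine Real.le_sqrt_of_sq_le (sq_sum_le_card_mul_sum_sq.trans ?_)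
        simp only [sq_abs, card_range]
        gcongr
        exact turan_kubilius hP hcop N

-- Only the terms with `p ∣ m`, a proportion `p⁻²` of `range N`, see a failure of multiplicativity.
lemma norm_sum_dilate_sub_le (hf : ∀ n, ‖f n‖ ≤ 1)
    (hmul : ∀ m n : ℕ, Nat.Coprime m n → u (m * n) = u m * u n) (hu : ∀ n, ‖u n‖ ≤ 1)
    {p : ℕ} (hp : p.Prime) (N : ℕ) :
    ‖∑ m ∈ range (N ⌈/⌉ p), f (p * m) * u (p * m)
        - u p * ∑ m ∈ range (N ⌈/⌉ p), f (p * m) * u m‖ ≤ 2 * (N * ((p : ℝ) ^ 2)⁻¹) + 4 := by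
  have hterm (m : ℕ) :
      ‖f (p * m) * u (p * m) - u p * (f (p * m) * u m)‖ ≤ if p ∣ m then 2 else 0 := by
    split_ifs with hpm
    · have hproduct : ‖u p * (f (p * m) * u m)‖ ≤ 1 := by
        rw [norm_mul, norm_mul]
        exact mul_le_one₀ (hu p) (by positivity) (mul_le_one₀ (hf _) (norm_nonneg _) (hu m))
      have hdilate : ‖f (p * m) * u (p * m)‖ ≤ 1 := by
        rw [norm_mul]
        exact mul_le_one₀ (hf _) (norm_nonneg _) (hu _)
      exact (norm_sub_le _ _).trans (by linarith)
    · rw [hmul p m ((Nat.Prime.coprime_iff_not_dvd hp).2 hpm), mul_left_comm, sub_self, norm_zero]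
  have hcount : (((N ⌈/⌉ p) ⌈/⌉ p : ℕ) : ℝ) ≤ N * ((p : ℝ) ^ 2)⁻¹ + 2 := by
    have hp1 : (1 : ℝ) ≤ p := by exact_mod_cast hp.one_le
    calc (((N ⌈/⌉ p) ⌈/⌉ p : ℕ) : ℝ) ≤ (N / p + 1) / p + 1 :=
          (cast_ceilDiv_le_div_add_one _ _).trans
            (by gcongr; exact cast_ceilDiv_le_div_add_one _ _)
      _ = N * ((p : ℝ) ^ 2)⁻¹ + 1 / p + 1 := by field_simp
      _ ≤ N * ((p : ℝ) ^ 2)⁻¹ + 2 := by linarith [div_le_one_of_le₀ hp1 (by positivity)]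
  rw [mul_sum, ← sum_sub_distrib]
  calc _ ≤ ∑ m ∈ range (N ⌈/⌉ p), (if p ∣ m then 2 else 0 : ℝ) :=
        norm_sum_le_of_le _ fun m _ => hterm m
    _ = 2 * ((N ⌈/⌉ p) ⌈/⌉ p : ℕ) := by
        rw [sum_range_ite_dvd hp.pos, sum_const, card_range, nsmul_eq_mul, mul_comm]
    _ ≤ 2 * (N * ((p : ℝ) ^ 2)⁻¹) + 4 := by linarith

lemma sum_range_ite_lt {M : Type*} [AddCommMonoid M] {K N : ℕ} (hKN : K ≤ N) (g : ℕ → M) :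
    ∑ m ∈ range N, (if m < K then g m else 0) = ∑ m ∈ range K, g m := by
  rw [← sum_filter]
  congr 1
  ext m
  simp only [mem_filter, mem_range]
  omega

lemma norm_sum_mul_sum_mul_le {ι : Type*} {s : Finset ι} {c : ι → ℂ} {g : ι → ℕ → ℂ}
    (hc : ∀ i, ‖c i‖ ≤ 1) (hg : ∀ i m, ‖g i m‖ ≤ 1) (hu : ∀ m, ‖u m‖ ≤ 1)
    {N : ℕ} {M : ι → ℕ} (hM : ∀ i ∈ s, M i ≤ N) {E : ℝ} (hE : 0 ≤ E)
    (hcorr : ∀ i ∈ s, ∀ j ∈ s, i ≠ j →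
      ‖∑ m ∈ range (min (M i) (M j)), g i m * conj (g j m)‖ ≤ E) :
    ‖∑ i ∈ s, c i * ∑ m ∈ range (M i), g i m * u m‖
      ≤ √(N * (∑ i ∈ s, (M i : ℝ) + (#s : ℝ) ^ 2 * E)) := by
  set a : ι → ℕ → ℂ := fun i m => if m < M i then c i * g i m else 0 with ha
  have hcg (i : ι) (m : ℕ) : ‖c i * g i m‖ ≤ 1 := by
    rw [norm_mul]
    exact mul_le_one₀ (hc i) (norm_nonneg _) (hg i m)
  have hswap : ∑ i ∈ s, c i * ∑ m ∈ range (M i), g i m * u m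
      = ∑ m ∈ range N, u m * ∑ i ∈ s, a i m := by
    simp_rw [mul_sum]
    rw [sum_comm]
    refine sum_congr rfl fun i hi => ?_
    simp_rw [ha, mul_ite, mul_zero, sum_range_ite_lt (hM i hi), mul_left_comm (u _), mul_comm (u _)]
  have hdiag : ∀ i ∈ s, ∑ m ∈ range N, ‖a i m‖ ^ 2 ≤ (M i : ℝ) := fun i hi =>
    calc ∑ m ∈ range N, ‖a i m‖ ^ 2 = ∑ m ∈ range (M i), ‖c i * g i m‖ ^ 2 := by
          rw [← sum_range_ite_lt (hM i hi)]
          exact sum_congr rfl fun m _ => by simp only [ha]; split_ifs <;> simp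
      _ ≤ M i := (sum_le_sum fun m _ => pow_le_one₀ (norm_nonneg _) (hcg i m)).trans (by simp)
  have hoffdiag : ∀ i ∈ s, ∀ j ∈ s, i ≠ j → ‖∑ m ∈ range N, a i m * conj (a j m)‖ ≤ E := by
    intro i hi j hj hij
    have hcut : ∑ m ∈ range N, a i m * conj (a j m)
        = c i * conj (c j) * ∑ m ∈ range (min (M i) (M j)), g i m * conj (g j m) := by
      rw [mul_sum, ← sum_range_ite_lt (min_le_of_left_le (hM i hi))]
      refine sum_congr rfl fun m _ => ?_
      simp only [ha, lt_min_iff, ite_and]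
      split_ifs <;> simp [mul_mul_mul_comm]
    rw [hcut, norm_mul, norm_mul, RCLike.norm_conj]
    exact (mul_le_of_le_one_left (norm_nonneg _)
      (mul_le_one₀ (hc i) (norm_nonneg _) (hc j))).trans (hcorr i hi j hj hij)
  rw [hswap]
  calc ‖∑ m ∈ range N, u m * ∑ i ∈ s, a i m‖
      ≤ ∑ m ∈ range N, ‖∑ i ∈ s, a i m‖ := norm_sum_le_of_le _ fun m _ => by
        rw [norm_mul]
        exact mul_le_of_le_one_left (norm_nonneg _) (hu m)
    _ ≤ √(N * (∑ i ∈ s, (M i : ℝ) + (#s : ℝ) ^ 2 * E)) := by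
        refine (sum_norm_sum_le_sqrt s (range N) a hE hoffdiag).trans ?_
        rw [card_range]
        gcongr with i hi
        exact hdiag i hi

lemma tendsto_ceilDiv_atTop {d : ℕ} (hd : 0 < d) : Tendsto (fun N : ℕ => N ⌈/⌉ d) atTop atTop :=
  tendsto_atTop_atTop.2 fun b => ⟨d * b, fun _ hN =>
    Nat.le_of_mul_le_mul_left (hN.trans (le_smul_ceilDiv hd)) hd⟩

lemma ceilDiv_le_self {d : ℕ} (hd : 0 < d) (N : ℕ) : N ⌈/⌉ d ≤ N :=
  (ceilDiv_le_iff_le_smul hd).2 (Nat.le_mul_of_pos_left N hd)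

lemma sqrt_mul_le_of_le_mul {a x y : ℝ} (ha : 0 ≤ a) (hx : 0 ≤ x) (hy : y ≤ a * x) :
    √(x * y) ≤ √a * x := by
  calc √(x * y) ≤ √(a * x ^ 2) := Real.sqrt_le_sqrt (by nlinarith)
    _ = √a * x := by rw [Real.sqrt_mul ha, Real.sqrt_sq hx]

lemma eventually_norm_bilinear_le (hf : ∀ n, ‖f n‖ ≤ 1) (hu : ∀ n, ‖u n‖ ≤ 1) {P : Finset ℕ}
    (hP : ∀ p ∈ P, 0 < p)
    (hcorr : ∀ p ∈ P, ∀ q ∈ P, p ≠ q →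
      (fun N => ∑ m ∈ range N, f (p * m) * conj (f (q * m))) =o[atTop] fun N => (N : ℝ)) :
    ∀ᶠ N : ℕ in atTop, ‖∑ p ∈ P, u p * ∑ m ∈ range (N ⌈/⌉ p), f (p * m) * u m‖
      ≤ √(∑ p ∈ P, (p : ℝ)⁻¹ + 1) * N := by
  set L := ∑ p ∈ P, (p : ℝ)⁻¹
  have hL : 0 ≤ L := sum_nonneg fun _ _ => by positivity
  set δ : ℝ := 1 / (2 * ((#P : ℝ) ^ 2 + 1)) with hδ
  have hδ0 : 0 < δ := by positivity
  have hsmall : ∀ᶠ N : ℕ in atTop, ∀ p ∈ P, ∀ q ∈ P, p ≠ q →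
      ‖∑ m ∈ range (min (N ⌈/⌉ p) (N ⌈/⌉ q)), f (p * m) * conj (f (q * m))‖
        ≤ δ * (min (N ⌈/⌉ p) (N ⌈/⌉ q) : ℕ) := by
    simp only [Filter.eventually_all_finset, Filter.eventually_imp_distrib_left]
    intro p hp q hq hpq
    have hcutoff : Tendsto (fun N : ℕ => min (N ⌈/⌉ p) (N ⌈/⌉ q)) atTop atTop :=
      tendsto_inf_atTop _ (tendsto_ceilDiv_atTop (hP p hp)) (tendsto_ceilDiv_atTop (hP q hq))
    simpa only [Real.norm_natCast] using hcutoff.eventually ((hcorr p hp q hq hpq).def hδ0)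
  filter_upwards [hsmall, eventually_ge_atTop (2 * #P)] with N hN hNP
  have hNP' : 2 * (#P : ℝ) ≤ N := by exact_mod_cast hNP
  have hcutoffs : ∑ p ∈ P, ((N ⌈/⌉ p : ℕ) : ℝ) ≤ L * N + #P := by
    refine (sum_le_sum fun p _ => cast_ceilDiv_le_div_add_one N p).trans (le_of_eq ?_)
    simp only [L, sum_add_distrib, sum_mul, inv_mul_eq_div, sum_const, nsmul_one]
  have hδP : (#P : ℝ) ^ 2 * (δ * N) ≤ 1 / 2 * N := by
    rw [← mul_assoc]
    gcongr
    rw [hδ, mul_one_div, div_le_div_iff₀ (by positivity) two_pos]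
    linarith
  refine (norm_sum_mul_sum_mul_le (M := fun p => N ⌈/⌉ p) (E := δ * N) hu (fun p m => hf (p * m))
    hu (fun p hp => ceilDiv_le_self (hP p hp) N) (by positivity) fun p hp q hq hpq => ?_).trans ?_
  · refine (hN p hp q hq hpq).trans ?_
    gcongr
    exact min_le_of_left_le (ceilDiv_le_self (hP p hp) N)
  · exact sqrt_mul_le_of_le_mul (by linarith) N.cast_nonneg (by linarith)

lemma norm_sum_primes_dilate_sub_le (hf : ∀ n, ‖f n‖ ≤ 1)
    (hmul : ∀ m n : ℕ, Nat.Coprime m n → u (m * n) = u m * u n) (hu : ∀ n, ‖u n‖ ≤ 1)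
    {P : Finset ℕ} (hP : ∀ p ∈ P, p.Prime) (N : ℕ) :
    ‖∑ p ∈ P, (∑ m ∈ range (N ⌈/⌉ p), f (p * m) * u (p * m)
        - u p * ∑ m ∈ range (N ⌈/⌉ p), f (p * m) * u m)‖
      ≤ 2 * (∑' n : ℕ, ((n : ℝ) ^ 2)⁻¹) * N + 4 * #P := by
  have hsquares : ∑ p ∈ P, ((p : ℝ) ^ 2)⁻¹ ≤ ∑' n : ℕ, ((n : ℝ) ^ 2)⁻¹ :=
    (Real.summable_nat_pow_inv.2 one_lt_two).sum_le_tsum P fun _ _ => by positivity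
  calc _ ≤ ∑ p ∈ P, (2 * (N * ((p : ℝ) ^ 2)⁻¹) + 4) := norm_sum_le_of_le _ fun p hp =>
        norm_sum_dilate_sub_le hf hmul hu (hP p hp) N
    _ = 2 * (∑ p ∈ P, ((p : ℝ) ^ 2)⁻¹) * N + 4 * #P := by
        rw [sum_add_distrib, ← mul_sum, ← mul_sum, sum_const, nsmul_eq_mul]; ring
    _ ≤ 2 * (∑' n : ℕ, ((n : ℝ) ^ 2)⁻¹) * N + 4 * #P := by gcongr

lemma mul_sum_mul_eq_bilinear_add_sub {P : Finset ℕ} (hP : ∀ p ∈ P, 0 < p) (L : ℝ) (N : ℕ) :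
    (L : ℂ) * ∑ n ∈ range N, f n * u n
      = ∑ p ∈ P, u p * ∑ m ∈ range (N ⌈/⌉ p), f (p * m) * u m
        + ∑ p ∈ P, (∑ m ∈ range (N ⌈/⌉ p), f (p * m) * u (p * m)
          - u p * ∑ m ∈ range (N ⌈/⌉ p), f (p * m) * u m)
        - ∑ n ∈ range N, f n * u n * ((#{p ∈ P | p ∣ n} - L : ℝ) : ℂ) := by
  have hcount := sum_range_mul_card_filter_dvd (d := id) hP N fun n => f n * u n
  simp only [id] at hcount
  push_cast
  simp only [sum_sub_distrib, mul_sub, hcount, ← sum_mul]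
  ring

lemma eventually_sum_inv_mul_norm_sum_le (hf : ∀ n, ‖f n‖ ≤ 1)
    (hmul : ∀ m n : ℕ, Nat.Coprime m n → u (m * n) = u m * u n) (hu : ∀ n, ‖u n‖ ≤ 1)
    {P : Finset ℕ} (hP : ∀ p ∈ P, p.Prime)
    (hcorr : ∀ p ∈ P, ∀ q ∈ P, p ≠ q →
      (fun N => ∑ m ∈ range N, f (p * m) * conj (f (q * m))) =o[atTop] fun N => (N : ℝ)) :
    ∀ᶠ N : ℕ in atTop, (∑ p ∈ P, (p : ℝ)⁻¹) * ‖∑ n ∈ range N, f n * u n‖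
      ≤ (2 * √(∑ p ∈ P, (p : ℝ)⁻¹ + 1) + (2 * ∑' n : ℕ, ((n : ℝ) ^ 2)⁻¹ + 1)) * N := by
  have hpos : ∀ p ∈ P, 0 < p := fun p hp => (hP p hp).pos
  have hcop : (P : Set ℕ).Pairwise Nat.Coprime := fun p hp q hq =>
    (Nat.coprime_primes (hP p hp) (hP q hq)).2
  have hfu (n : ℕ) : ‖f n * u n‖ ≤ 1 := by
    rw [norm_mul]
    exact mul_le_one₀ (hf n) (norm_nonneg _) (hu n)
  set L := ∑ p ∈ P, (p : ℝ)⁻¹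
  have hL : 0 ≤ L := sum_nonneg fun _ _ => by positivity
  filter_upwards [eventually_norm_bilinear_le hf hu hpos hcorr,
    eventually_ge_atTop (#P ^ 2), eventually_ge_atTop (4 * #P)] with N hbilinear hN hN'
  have hdilate : ‖∑ p ∈ P, (∑ m ∈ range (N ⌈/⌉ p), f (p * m) * u (p * m)
      - u p * ∑ m ∈ range (N ⌈/⌉ p), f (p * m) * u m)‖
      ≤ (2 * ∑' n : ℕ, ((n : ℝ) ^ 2)⁻¹ + 1) * N := by
    refine (norm_sum_primes_dilate_sub_le hf hmul hu hP N).trans ?_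
    rw [add_one_mul]
    gcongr
    exact_mod_cast hN'
  have hfluctuation := (norm_sum_mul_card_filter_dvd_sub_le hpos hcop hfu N).trans
    (sqrt_mul_le_of_le_mul (add_nonneg hL zero_le_one) N.cast_nonneg
      (show L * N + (#P : ℝ) ^ 2 ≤ (L + 1) * N by
        rw [add_one_mul]; gcongr; exact_mod_cast hN))
  calc L * ‖∑ n ∈ range N, f n * u n‖ = ‖(L : ℂ) * ∑ n ∈ range N, f n * u n‖ := by
        rw [norm_mul, Complex.norm_of_nonneg hL]
    _ ≤ √(L + 1) * N + (2 * ∑' n : ℕ, ((n : ℝ) ^ 2)⁻¹ + 1) * N + √(L + 1) * N := by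
        rw [mul_sum_mul_eq_bilinear_add_sub hpos]
        exact (norm_sub_le _ _).trans
          (add_le_add ((norm_add_le _ _).trans (add_le_add hbilinear hdilate)) hfluctuation)
    _ = (2 * √(L + 1) + (2 * ∑' n : ℕ, ((n : ℝ) ^ 2)⁻¹ + 1)) * N := by ring

lemma exists_finset_primes_le_sum_inv (B : ℝ) :
    ∃ P : Finset ℕ, (∀ p ∈ P, p.Prime) ∧ B ≤ ∑ p ∈ P, (p : ℝ)⁻¹ := by
  by_contra! h
  refine Nat.Primes.not_summable_one_div
    (summable_of_sum_le (c := B) (fun _ => by positivity) fun s => ?_)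
  have hs := h (s.map ⟨(↑), Nat.Primes.coe_nat_injective⟩) fun p hp => by
    obtain ⟨q, -, rfl⟩ := mem_map.1 hp
    exact q.2
  rw [sum_map] at hs
  simp only [one_div]
  exact hs.le

theorem katai_criterion (hf : ∀ n, ‖f n‖ ≤ 1)
    (hmul : ∀ m n : ℕ, Nat.Coprime m n → u (m * n) = u m * u n) (hu : ∀ n, ‖u n‖ ≤ 1)
    (hcorr : ∀ p q : ℕ, p.Prime → q.Prime → p ≠ q →
      (fun N => ∑ m ∈ range N, f (p * m) * conj (f (q * m))) =o[atTop] fun N => (N : ℝ)) :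
    (fun N => ∑ n ∈ range N, f n * u n) =o[atTop] fun N => (N : ℝ) := by
  refine isLittleO_iff.2 fun ε hε => ?_
  obtain ⟨B, hB⟩ := eventually_atTop.1
    (eventually_two_mul_sqrt_add_le (2 * ∑' n : ℕ, ((n : ℝ) ^ 2)⁻¹ + 1) hε)
  obtain ⟨P, hP, hPB⟩ := exists_finset_primes_le_sum_inv (max B 1)
  filter_upwards [eventually_sum_inv_mul_norm_sum_le hf hmul hu hP
    fun p hp q hq => hcorr p q (hP p hp) (hP q hq)] with N hN
  have hL := one_pos.trans_le ((le_max_right B 1).trans hPB)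
  refine le_of_mul_le_mul_left (hN.trans ?_) hL
  rw [Real.norm_natCast, mul_left_comm, ← mul_assoc]
  gcongr
  exact hB _ ((le_max_left B 1).trans hPB)

end Katai

/-! ### Blocks and sets of density zero -/

section Blocks

variable {B : ℕ → ℕ}

/-- The index of the block `[B k, B (k + 1))` containing `n`, for a strictly increasing `B` with
`B 0 = 0`. -/
def blockIndex (B : ℕ → ℕ) (n : ℕ) : ℕ := Nat.findGreatest (fun k => B k ≤ n) n

lemma apply_blockIndex_le (hB0 : B 0 = 0) (n : ℕ) : B (blockIndex B n) ≤ n :=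
  Nat.findGreatest_spec (P := fun k => B k ≤ n) n.zero_le (hB0.trans_le n.zero_le)

lemma le_blockIndex_iff (hB : StrictMono B) (hB0 : B 0 = 0) {k n : ℕ} :
    k ≤ blockIndex B n ↔ B k ≤ n :=
  ⟨fun h => (hB.monotone h).trans (apply_blockIndex_le hB0 n),
    fun h => Nat.le_findGreatest (hB.le_apply.trans h) h⟩

lemma lt_apply_blockIndex_add_one (hB : StrictMono B) (hB0 : B 0 = 0) (n : ℕ) :
    n < B (blockIndex B n + 1) :=
  not_le.1 fun h => (blockIndex B n).lt_irrefl ((le_blockIndex_iff hB hB0).2 h)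

lemma blockIndex_eq (hB : StrictMono B) (hB0 : B 0 = 0) {k n : ℕ} (hkn : B k ≤ n)
    (hnk : n < B (k + 1)) : blockIndex B n = k :=
  le_antisymm (Nat.lt_succ_iff.1 (not_le.1 fun h => hnk.not_ge ((le_blockIndex_iff hB hB0).1 h)))
    ((le_blockIndex_iff hB hB0).2 hkn)

lemma tendsto_blockIndex_atTop (hB : StrictMono B) (hB0 : B 0 = 0) :
    Tendsto (blockIndex B) atTop atTop :=
  tendsto_atTop.2 fun k => (eventually_ge_atTop (B k)).mono fun _ => (le_blockIndex_iff hB hB0).2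

lemma isLittleO_natCast_of_tendsto_gap (hB : StrictMono B) (hB0 : B 0 = 0)
    (hgap : Tendsto (fun k => B (k + 1) - B k) atTop atTop) :
    (fun k : ℕ => (k : ℝ)) =o[atTop] fun k => (B k : ℝ) := by
  have hcast (k : ℕ) : ((B (k + 1) - B k : ℕ) : ℝ) = B (k + 1) - B k :=
    Nat.cast_sub (hB.monotone k.le_succ)
  have hsum (k : ℕ) : ∑ j ∈ range k, ((B (j + 1) - B j : ℕ) : ℝ) = B k := by
    simp_rw [hcast, sum_range_sub (fun j => (B j : ℝ)), hB0, Nat.cast_zero, sub_zero]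
  have hone : (fun _ => (1 : ℝ)) =o[atTop] fun k => ((B (k + 1) - B k : ℕ) : ℝ) :=
    (isLittleO_const_left_of_ne one_ne_zero).2
      (tendsto_norm_atTop_atTop.comp (tendsto_natCast_atTop_atTop.comp hgap))
  simpa [hsum] using hone.sum_range (fun _ => Nat.cast_nonneg _)
    (by simp_rw [hsum]; exact tendsto_natCast_atTop_atTop.comp hB.tendsto_atTop)

end Blocks

open Classical in
/-- The natural density of `S` exists and is zero: `S` has `o(N)` elements below `N`. -/
def HasDensityZero (S : Set ℕ) : Prop :=
  (fun N => (Nat.count (· ∈ S) N : ℝ)) =o[atTop] fun N => (N : ℝ)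

namespace HasDensityZero

variable {S S' : Set ℕ}

open Classical in
lemma union (hS : HasDensityZero S) (hS' : HasDensityZero S') : HasDensityZero (S ∪ S') := by
  refine (isBigO_of_le _ fun N => ?_).trans_isLittleO (hS.add hS')
  rw [Real.norm_natCast, ← Nat.cast_add, Real.norm_natCast, Nat.cast_le]
  simp_rw [Nat.count_eq_card_filter_range, Set.mem_union, filter_or]
  exact card_union_le _ _

open Classical in
lemma image_div (hS : HasDensityZero S) {p : ℕ} (hp : 0 < p) : HasDensityZero ((· / p) '' S) := by
  have hdilate : (fun N : ℕ => (Nat.count (· ∈ S) (p * N) : ℝ)) =o[atTop] fun N => (N : ℝ) := by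
    refine (hS.comp_tendsto (tendsto_id.const_mul_atTop' hp)).trans_isBigO ?_
    simpa [Function.comp_def] using (isBigO_refl (fun N : ℕ => (N : ℝ)) atTop).const_mul_left p
  refine (isBigO_of_le _ fun N => ?_).trans_isLittleO hdilate
  rw [Real.norm_natCast, Real.norm_natCast, Nat.cast_le]
  simp_rw [Nat.count_eq_card_filter_range]
  refine (card_le_card fun n hn => ?_).trans (card_image_le (f := (· / p)))
  obtain ⟨hnN, s, hs, rfl⟩ := mem_filter.1 hn
  rw [mem_range, Nat.div_lt_iff_lt_mul hp, mul_comm] at hnN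
  exact mem_image_of_mem _ (mem_filter.2 ⟨mem_range.2 hnN, hs⟩)

open Classical in
lemma range_of_tendsto_gap {B : ℕ → ℕ} (hB : StrictMono B) (hB0 : B 0 = 0)
    (hgap : Tendsto (fun k => B (k + 1) - B k) atTop atTop) : HasDensityZero (Set.range B) := by
  have hcount (N : ℕ) : Nat.count (· ∈ Set.range B) N ≤ blockIndex B N + 1 := by
    rw [Nat.count_eq_card_filter_range, ← card_range (blockIndex B N + 1)]
    refine (card_le_card fun n hn => ?_).trans (card_image_le (f := B))
    obtain ⟨hnN, k, rfl⟩ := mem_filter.1 hn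
    exact mem_image_of_mem B (mem_range.2 (Nat.lt_succ_iff.2
      ((le_blockIndex_iff hB hB0).2 (mem_range.1 hnN).le)))
  have hone : (fun _ => (1 : ℝ)) =o[atTop] fun k => (B k : ℝ) :=
    (isLittleO_const_left_of_ne one_ne_zero).2
      (tendsto_norm_atTop_atTop.comp (tendsto_natCast_atTop_atTop.comp hB.tendsto_atTop))
  have hindex := ((isLittleO_natCast_of_tendsto_gap hB hB0 hgap).add hone).comp_tendsto
    (tendsto_blockIndex_atTop hB hB0)
  refine (isBigO_of_le _ fun N => ?_).trans_isLittleO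
    (hindex.trans_isBigO (isBigO_of_le _ fun N => ?_))
  · simp only [Function.comp_apply, ← Nat.cast_add_one, Real.norm_natCast]
    exact_mod_cast hcount N
  · simp only [Function.comp_apply, Real.norm_natCast, Nat.cast_le]
    exact apply_blockIndex_le hB0 N

end HasDensityZero

open Classical in
lemma norm_sum_range_le_of_intervals {g : ℕ → ℂ} (hg : ∀ n, ‖g n‖ ≤ 1) {S : Set ℕ} {ε C : ℝ}
    (hε : 0 ≤ ε) (hS : ∀ a L, (∀ m < L, a + m ∉ S) → ‖∑ m ∈ range L, g (a + m)‖ ≤ ε * L + C)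
    (N : ℕ) : ‖∑ n ∈ range N, g n‖ ≤ ε * N + ((C + 1) * Nat.count (· ∈ S) N + C) := by
  suffices h : ∀ L, (∀ m < L, N + m ∉ S) → ‖∑ n ∈ range (N + L), g n‖ ≤
      ε * (N + L) + ((C + 1) * Nat.count (· ∈ S) N + C) by
    simpa using h 0 (by simp)
  induction N with
  | zero => intro L hL; simpa using hS 0 L hL
  | succ N ih =>
    intro L hL
    by_cases hN : N ∈ S
    · rw [sum_range_add, sum_range_succ, Nat.count_succ, if_pos hN]
      have hhead := ih 0 (by simp)
      have htail := hS (N + 1) L hL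
      have htriangle := norm_add₃_le (a := ∑ n ∈ range N, g n) (b := g N)
        (c := ∑ m ∈ range L, g (N + 1 + m))
      push_cast at hhead ⊢
      rw [add_zero] at hhead
      linarith [hg N]
    · rw [Nat.count_succ, if_neg hN, add_zero]
      have hstep := ih (L + 1) fun m hm => by
        rcases m with _ | m
        · exact hN
        · exact add_right_comm N 1 m ▸ hL m (by omega)
      push_cast at hstep ⊢
      rwa [add_right_comm N 1 L, add_assoc N L 1, add_right_comm, add_assoc (N : ℝ) L 1]

/-! ### Multiplicative functions along blocks -/

lemma isLittleO_sum_range_of_hasDensityZero {g : ℕ → ℂ} (hg : ∀ n, ‖g n‖ ≤ 1) {S : Set ℕ}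
    (hS : HasDensityZero S) (hgS : ∀ ε : ℝ, 0 < ε → ∃ C : ℝ, ∀ a L, (∀ m < L, a + m ∉ S) →
      ‖∑ m ∈ range L, g (a + m)‖ ≤ ε * L + C) :
    (fun N => ∑ n ∈ range N, g n) =o[atTop] fun N => (N : ℝ) := by
  refine isLittleO_iff.2 fun ε hε => ?_
  obtain ⟨C, hC⟩ := hgS (ε / 2) (half_pos hε)
  have hone : (fun _ : ℕ => C) =o[atTop] fun N : ℕ => (N : ℝ) :=
    (isLittleO_const_id_atTop C).comp_tendsto tendsto_natCast_atTop_atTop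
  filter_upwards [((hS.const_mul_left (C + 1)).add hone).def (half_pos hε)] with N hN
  rw [Real.norm_natCast] at hN ⊢
  linarith [norm_sum_range_le_of_intervals hg (half_pos hε).le hC N, Real.le_norm_self
    ((C + 1) * (open Classical in Nat.count (· ∈ S) N : ℝ) + C)]

section Blocks

variable {B : ℕ → ℕ} {φ : ℕ → ℕ → Circle}

/-- The sequence equal to `φ k` inside the open block `(B k, B (k + 1))` and to `0` at each
breakpoint `B k`. -/
noncomputable def blockwisePhase (B : ℕ → ℕ) (φ : ℕ → ℕ → Circle) (n : ℕ) : ℂ :=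
  if B (blockIndex B n) = n then 0 else φ (blockIndex B n) n

lemma norm_blockwisePhase_le_one (B : ℕ → ℕ) (φ : ℕ → ℕ → Circle) (n : ℕ) :
    ‖blockwisePhase B φ n‖ ≤ 1 := by
  unfold blockwisePhase
  split_ifs
  exacts [norm_zero.trans_le zero_le_one, (Circle.norm_coe _).le]

lemma blockwisePhase_eq_zero (hB : StrictMono B) (hB0 : B 0 = 0) (φ : ℕ → ℕ → Circle) (k : ℕ) :
    blockwisePhase B φ (B k) = 0 :=
  if_pos (congrArg B (blockIndex_eq hB hB0 le_rfl (hB k.lt_succ_self)))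

lemma blockwisePhase_eq (hB : StrictMono B) (hB0 : B 0 = 0) (φ : ℕ → ℕ → Circle) {k n : ℕ}
    (hkn : B k < n) (hnk : n < B (k + 1)) : blockwisePhase B φ n = φ k n := by
  rw [blockwisePhase, blockIndex_eq hB hB0 hkn.le hnk, if_neg hkn.ne]

lemma sum_range_blockwisePhase_mul (hB : StrictMono B) (hB0 : B 0 = 0) (φ : ℕ → ℕ → Circle)
    (u : ℕ → ℂ) (K : ℕ) : ∑ n ∈ range (B K), blockwisePhase B φ n * u n =
      ∑ k ∈ range K, ∑ n ∈ Ico (B k + 1) (B (k + 1)), (φ k n : ℂ) * u n := by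
  induction K with
  | zero => simp [hB0]
  | succ K ih =>
    have hlt := hB K.lt_succ_self
    rw [sum_range_succ, ← ih, ← sum_range_add_sum_Ico _ hlt.le, sum_eq_sum_Ico_succ_bot hlt,
      blockwisePhase_eq_zero hB hB0, zero_mul, zero_add]
    refine congrArg _ (sum_congr rfl fun n hn => ?_)
    rw [mem_Ico] at hn
    rw [blockwisePhase_eq hB hB0 φ hn.1 hn.2]

lemma exists_isPolySeq_blockwisePhase_dilate (hB : StrictMono B) (hB0 : B 0 = 0) {d : ℕ}
    {w : Circle} (hφ : ∀ k, IsPolySeq d w (φ k)) {p : ℕ} (hp : 0 < p) {a L : ℕ}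
    (hL : ∀ m < L, a + m ∉ (· / p) '' Set.range B) :
    ∃ ψ : ℕ → Circle, IsPolySeq d (w ^ p ^ d) ψ ∧
      ∀ m < L, blockwisePhase B φ (p * (a + m)) = ψ m := by
  have havoid (m : ℕ) (hm : m < L) (j : ℕ) : B j / p ≠ a + m :=
    fun h => hL m hm ⟨B j, ⟨j, rfl⟩, h⟩
  set k := blockIndex B (p * a)
  refine ⟨_, ((hφ k).dilate p).shift a, fun m hm => ?_⟩
  rw [add_comm a m]
  refine blockwisePhase_eq hB hB0 φ ?_ (not_le.1 fun hle => ?_)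
  · have hk : B k / p ≤ a := Nat.div_le_of_le_mul (apply_blockIndex_le hB0 (p * a))
    have hka : B k / p < a := hk.lt_of_ne (havoid 0 (by omega) k)
    exact mul_comm p (m + a) ▸ Nat.lt_mul_of_div_lt (hka.trans_le (Nat.le_add_left a m)) hp
  · have hka : a ≤ B (k + 1) / p :=
      (Nat.le_div_iff_mul_le hp).2 (mul_comm p a ▸ (lt_apply_blockIndex_add_one hB hB0 (p * a)).le)
    have hkm : B (k + 1) / p ≤ m + a := Nat.div_le_of_le_mul hle
    exact havoid (B (k + 1) / p - a) (by omega) (k + 1) (by omega)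

lemma isLittleO_correlation_blockwisePhase (hB : StrictMono B) (hB0 : B 0 = 0)
    (hgap : Tendsto (fun k => B (k + 1) - B k) atTop atTop) {d : ℕ} {w : Circle}
    (hw : ¬IsOfFinOrder w) (hφ : ∀ k, IsPolySeq (d + 1) w (φ k)) {p q : ℕ} (hp : 0 < p)
    (hq : 0 < q) (hpq : p ≠ q) :
    (fun N => ∑ m ∈ range N, blockwisePhase B φ (p * m) * conj (blockwisePhase B φ (q * m)))
      =o[atTop] fun N => (N : ℝ) := by
  have hbreak := HasDensityZero.range_of_tendsto_gap hB hB0 hgap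
  refine isLittleO_sum_range_of_hasDensityZero (fun m => ?_)
    ((hbreak.image_div hp).union (hbreak.image_div hq)) fun ε hε => ?_
  · rw [norm_mul, RCLike.norm_conj]
    exact mul_le_one₀ (norm_blockwisePhase_le_one B φ _) (norm_nonneg _)
      (norm_blockwisePhase_le_one B φ _)
  have hw' : ¬IsOfFinOrder (w ^ p ^ (d + 1) / w ^ q ^ (d + 1)) :=
    not_isOfFinOrder_pow_div_pow hw fun h => hpq (Nat.pow_left_injective d.succ_ne_zero h)
  obtain ⟨C, hC⟩ := IsPolySeq.exists_norm_sum_range_le (d := d) hw' hε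
  refine ⟨C, fun a L hL => ?_⟩
  simp_rw [Set.mem_union, not_or] at hL
  obtain ⟨ψ, hψ, hψp⟩ :=
    exists_isPolySeq_blockwisePhase_dilate hB hB0 hφ hp fun m hm => (hL m hm).1
  obtain ⟨ψ', hψ', hψq⟩ :=
    exists_isPolySeq_blockwisePhase_dilate hB hB0 hφ hq fun m hm => (hL m hm).2
  convert hC _ (hψ.div hψ') L using 3 with m hm
  rw [hψp m (mem_range.1 hm), hψq m (mem_range.1 hm), coe_circle_div]

lemma isLittleO_sum_blocks (hB : StrictMono B) (hB0 : B 0 = 0)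
    (hgap : Tendsto (fun k => B (k + 1) - B k) atTop atTop) {d : ℕ} {w : Circle}
    (hw : ¬IsOfFinOrder w) (hφ : ∀ k, IsPolySeq (d + 1) w (φ k)) {u : ℕ → ℂ}
    (hmul : ∀ m n : ℕ, m.Coprime n → u (m * n) = u m * u n) (hu : ∀ n, ‖u n‖ ≤ 1) :
    (fun K => ∑ k ∈ range K, ∑ n ∈ Ico (B k + 1) (B (k + 1)), (φ k n : ℂ) * u n)
      =o[atTop] fun K => (B K : ℝ) := by
  simp_rw [← sum_range_blockwisePhase_mul hB hB0 φ u]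
  exact (katai_criterion (norm_blockwisePhase_le_one B φ) hmul hu fun p q hp hq hpq =>
    isLittleO_correlation_blockwisePhase hB hB0 hgap hw hφ hp.pos hq.pos hpq).comp_tendsto
      hB.tendsto_atTop

lemma exists_circle_mul_eq_norm (z : ℂ) : ∃ c : Circle, (c : ℂ) * z = ‖z‖ := by
  obtain ⟨c, hc, hcz⟩ := Complex.exists_norm_eq_mul_self z
  exact ⟨⟨c, mem_sphere_zero_iff_norm.2 hc⟩, hcz.symm⟩

lemma isLittleO_sum_norm_sum_blocks (hB : StrictMono B) (hB0 : B 0 = 0)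
    (hgap : Tendsto (fun k => B (k + 1) - B k) atTop atTop) {d : ℕ} {w : Circle}
    (hw : ¬IsOfFinOrder w) (hφ : ∀ k, IsPolySeq (d + 1) w (φ k)) {u : ℕ → ℂ}
    (hmul : ∀ m n : ℕ, m.Coprime n → u (m * n) = u m * u n) (hu : ∀ n, ‖u n‖ ≤ 1) :
    (fun K => ∑ k ∈ range K, ‖∑ n ∈ Ico (B k + 1) (B (k + 1)), (φ k n : ℂ) * u n‖)
      =o[atTop] fun K => (B K : ℝ) := by
  choose c hc using fun k =>
    exists_circle_mul_eq_norm (∑ n ∈ Ico (B k + 1) (B (k + 1)), (φ k n : ℂ) * u n)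
  have hcφ (k : ℕ) : IsPolySeq (d + 1) w fun n => c k * φ k n := by
    simpa only [one_mul] using (IsPolySeq.const d (c k)).mul (hφ k)
  refine .of_norm_left ((isLittleO_sum_blocks hB hB0 hgap hw hcφ hmul hu).norm_left.congr_left
    fun K => ?_)
  simp_rw [Circle.coe_mul, mul_assoc, ← mul_sum, hc, ← Complex.ofReal_sum, Complex.norm_real]

lemma tendsto_inv_mul_sum_norm_sum_blocks {b : ℕ → ℕ} (hb1 : b 1 = 1)
    (hb : ∀ k ≥ 1, b k < b (k + 1)) (hgap : Tendsto (fun k => b (k + 1) - b k) atTop atTop)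
    {d : ℕ} {w : Circle} (hw : ¬IsOfFinOrder w) (hφ : ∀ k, IsPolySeq (d + 1) w (φ k)) {u : ℕ → ℂ}
    (hmul : ∀ m n : ℕ, m.Coprime n → u (m * n) = u m * u n) (hu : ∀ n, ‖u n‖ ≤ 1) :
    Tendsto (fun K => (b (K + 1) : ℝ)⁻¹ *
      ∑ k ∈ Icc 1 K, ‖∑ n ∈ Ico (b k + 1) (b (k + 1)), (φ k n : ℂ) * u n‖) atTop (nhds 0) := by
  -- Starting the blocks at `0` only adds the empty sum over `Ico 1 1`.
  let B : ℕ → ℕ := Function.update b 0 0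
  have hB0 : B 0 = 0 := Function.update_self ..
  have hBb (k : ℕ) : B (k + 1) = b (k + 1) := Function.update_of_ne k.succ_ne_zero ..
  have hB : StrictMono B := strictMono_nat_of_lt_succ fun
    | 0 => by rw [hB0, hBb, hb1]; exact one_pos
    | k + 1 => by simpa only [hBb] using hb (k + 1) k.succ_pos
  have hBgap : Tendsto (fun k => B (k + 1) - B k) atTop atTop := (tendsto_add_atTop_iff_nat 1).1
    (by simpa only [hBb] using (tendsto_add_atTop_iff_nat 1).2 hgap)
  refine (((isLittleO_sum_norm_sum_blocks hB hB0 hBgap hw hφ hmul hu).comp_tendsto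
    (tendsto_add_atTop_nat 1)).tendsto_div_nhds_zero).congr fun K => ?_
  simp only [Function.comp_apply, sum_range_succ', hBb, hB0, hb1, zero_add, Ico_self, sum_empty,
    norm_zero, add_zero, div_eq_inv_mul]
  rw [range_eq_Ico, sum_Ico_add' (fun k => ‖∑ n ∈ Ico (b k + 1) (b (k + 1)), (φ k n : ℂ) * u n‖),
    zero_add, Ico_add_one_right_eq_Icc]

end Blocks

/-! ### Characters along orbits of affine maps -/

lemma isPolySeq_addChar_iterate {X G : Type*} [AddCommGroup X] [CommGroup G]
    (A : AddMonoid.End X) (b : X) {m : ℕ} {η : AddChar X G}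
    (hη : ∀ x, η (((A - 1) ^ (m + 1)) x) = 1) (z : X) :
    IsPolySeq (m + 1) (η (((A - 1) ^ m) b)) fun n => η ((fun x => A x + b)^[n] z) := by
  have hstep (η : AddChar X G) (n : ℕ) :
      η ((fun x => A x + b)^[n + 1] z) / η ((fun x => A x + b)^[n] z) =
        η ((A - 1) ((fun x => A x + b)^[n] z)) * η b := by
    rw [Function.iterate_succ_apply', div_eq_iff_eq_mul, ← AddChar.map_add_eq_mul,
      ← AddChar.map_add_eq_mul, add_right_comm]
    exact congrArg (fun y => η (y + b)) (sub_add_cancel _ _).symm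
  induction m generalizing η with
  | zero => exact fun n => (hstep η n).trans (by rw [← pow_one (A - 1), hη, one_mul]; rfl)
  | succ m ih =>
    let N : X →+ X := (A - 1 : AddMonoid.End X)
    have hdiff : IsPolySeq (m + 1) (η (((A - 1) ^ (m + 1)) b)) fun n =>
        η ((A - 1) ((fun x => A x + b)^[n] z)) := by
      rw [pow_succ']
      exact ih (η := η.compAddMonoidHom N) fun x => by
        rw [AddChar.compAddMonoidHom_apply, ← hη x, pow_succ' _ (m + 1)]; rfl
    simpa only [IsPolySeq, hstep, mul_one] using hdiff.mul (.const m (η b))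

lemma addChar_eq_one_of_pow_eq_one {X : Type*} [AddMonoid X] [TopologicalSpace X]
    [PreconnectedSpace X] {η : AddChar X Circle} (hη : Continuous η) {k : ℕ} (hk : 0 < k)
    (hpow : ∀ x, η x ^ k = 1) : η = 1 := by
  have hfinite : (Set.range η).Finite := by
    refine Set.Finite.of_finite_image (f := ((↑) : Circle → ℂ))
      ((Polynomial.nthRoots k (1 : ℂ)).toFinset.finite_toSet.subset ?_) Circle.coe_injective.injOn
    rintro _ ⟨_, ⟨x, rfl⟩, rfl⟩
    simp [Polynomial.mem_nthRoots hk, ← Circle.coe_pow, hpow]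
  have hsub : (Set.range η).Subsingleton := Set.not_nontrivial_iff.1 fun h =>
    (isPreconnected_range hη).infinite_of_nontrivial h hfinite
  refine AddChar.eq_one_iff.2 fun x => ?_
  rw [hsub (Set.mem_range_self x) (Set.mem_range_self 0), AddChar.map_zero_eq_one]

lemma not_isOfFinOrder_addChar_of_dense_closure {X : Type*} [AddGroup X] [TopologicalSpace X]
    [PreconnectedSpace X] {s : Set X} {b : X}
    (hdense : Dense (AddSubgroup.closure (s ∪ {b}) : Set X)) {η : AddChar X Circle}
    (hη : Continuous η) (hs : ∀ x ∈ s, η x = 1) (hne : η ≠ 1) :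
    ¬IsOfFinOrder (η b) := by
  rw [isOfFinOrder_iff_pow_eq_one]
  rintro ⟨k, hk, hb⟩
  have hgen : Set.EqOn (η ^ k).toAddMonoidHom (1 : AddChar X Circle).toAddMonoidHom (s ∪ {b}) := by
    rintro x (hx | rfl)
    · exact show η x ^ k = 1 by rw [hs x hx, one_pow]
    · exact hb
  have hpow : (fun x => η x ^ k) = fun _ => 1 :=
    (hη.pow k).ext_on hdense continuous_const (AddMonoidHom.eqOn_closure hgen)
  exact hne (addChar_eq_one_of_pow_eq_one hη hk (congrFun hpow))

lemma exists_isPolySeq_addChar_iterate {X : Type*} [TopologicalSpace X] [PreconnectedSpace X]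
    [AddCommGroup X] [IsTopologicalAddGroup X] {A : AddMonoid.End X} (hA : Continuous A) {b : X}
    (hdense : Dense (AddSubgroup.closure ((Set.range fun x => A x - x) ∪ {b}) : Set X))
    {η : AddChar X Circle} (hη : Continuous η) (hne : η ≠ 1)
    (hunip : ∃ m : ℕ, ∀ x, η (((A - 1) ^ m) x) = 1) :
    ∃ (d : ℕ) (w : Circle), ¬IsOfFinOrder w ∧
      ∀ z, IsPolySeq (d + 1) w fun n => η ((fun x => A x + b)^[n] z) := by
  classical
  obtain ⟨m, hm⟩ : ∃ m, Nat.find hunip = m + 1 := Nat.exists_eq_succ_of_ne_zero fun h =>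
    hne (AddChar.eq_one_iff.2 ((Nat.find_eq_zero hunip).1 h))
  have hvanish := hm ▸ Nat.find_spec hunip
  have hnonvanish := Nat.find_min hunip (m := m) (by omega)
  let N : X →+ X := ((A - 1) ^ m : AddMonoid.End X)
  have hcont : Continuous N := by
    have hN : ⇑N = (fun x => A x - x)^[m] := AddMonoid.End.coe_pow _ _ m
    exact hN ▸ (hA.sub continuous_id).iterate m
  refine ⟨m, η (N b), not_isOfFinOrder_addChar_of_dense_closure (η := η.compAddMonoidHom N) hdense
    (hη.comp hcont) ?_ fun h => hnonvanish (AddChar.eq_one_iff.1 h),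
    isPolySeq_addChar_iterate A b hvanish⟩
  rintro _ ⟨x, rfl⟩
  exact hvanish x

lemma exists_continuous_addChar_coe_eq {X : Type*} [AddMonoid X] [TopologicalSpace X] {χ : X → ℂ}
    (hcont : Continuous χ) (hhom : ∀ x y, χ (x + y) = χ x * χ y) (hnorm : ∀ x, ‖χ x‖ = 1) :
    ∃ η : AddChar X Circle, Continuous η ∧ ∀ x, (η x : ℂ) = χ x := by
  have hzero : χ 0 = 1 := by
    have hne : χ 0 ≠ 0 := norm_ne_zero_iff.1 ((hnorm 0).symm ▸ one_ne_zero)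
    exact mul_left_cancel₀ hne (by rw [← hhom, add_zero, mul_one])
  exact ⟨⟨fun x => ⟨χ x, mem_sphere_zero_iff_norm.2 (hnorm x)⟩, Circle.ext hzero,
    fun x y => Circle.ext (hhom x y)⟩, hcont.subtype_mk _, fun _ => rfl⟩

end

theorem character_orthogonality_affine_unipotent_general
    {X : Type*} [TopologicalSpace X] [ConnectedSpace X] [AddCommGroup X] [IsTopologicalAddGroup X]
    (A : X →+ X) (hA : Continuous A) (b : X)
    (hdense : Dense (AddSubgroup.closure (Set.range (fun x => A x - x) ∪ {b}) : Set X))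
    (u : ℕ → ℂ) (hmul : ∀ m n : ℕ, Nat.Coprime m n → u (m * n) = u m * u n) (hu : ∀ n, ‖u n‖ ≤ 1)
    (χ : X → ℂ) (hχcont : Continuous χ) (hχhom : ∀ x y, χ (x + y) = χ x * χ y)
    (hχnorm : ∀ x, ‖χ x‖ = 1) (hχne : ∃ x, χ x ≠ 1)
    (hunip : ∃ m : ℕ, ∀ x, χ ((fun z => A z - z)^[m] x) = 1)
    (bseq : ℕ → ℕ) (hb1 : bseq 1 = 1) (hbmono : ∀ k ≥ 1, bseq k < bseq (k + 1))
    (hbgap : Tendsto (fun k => bseq (k + 1) - bseq k) atTop atTop) (z : ℕ → X) :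
    Tendsto (fun K : ℕ => (bseq (K + 1) : ℝ)⁻¹ * ∑ k ∈ Finset.Icc 1 K,
      ‖∑ n ∈ Finset.Ico (bseq k + 1) (bseq (k + 1)), χ ((fun x => A x + b)^[n] (z k)) * u n‖)
      atTop (nhds 0) := by
  obtain ⟨η, hη, hηχ⟩ := exists_continuous_addChar_coe_eq hχcont hχhom hχnorm
  simp_rw [← hηχ, ne_eq, Circle.coe_eq_one] at hχne hunip
  obtain ⟨d, w, hw, horbit⟩ := exists_isPolySeq_addChar_iterate (A := A) hA hdense hη
    (AddChar.ne_one_iff.2 hχne)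
    (hunip.imp fun m hm x => by rw [AddMonoid.End.coe_pow]; exact hm x)
  simp_rw [← hηχ]
  exact tendsto_inv_mul_sum_norm_sum_blocks hb1 hbmono hbgap hw (fun k => horbit (z k)) hmul hu

/-- **Theorem 4.1.** Let `X` be a compact connected metrizable abelian group, `A` a continuous
group automorphism of `X`, `b ∈ X`, and `Tx = Ax + b`. Assume the subgroup generated by
`(A−I)X` and `b` is dense in `X`, and every continuous character `χ` of `X` satisfies
`χ ∘ (A−I)^m = 1` for some `m ≥ 0`. Then for every multiplicative `u`, `|u| ≤ 1`, every
nontrivial continuous character `χ`, every sequence `1 = b₁ < b₂ < ⋯` with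
`b_{k+1} − b_k → ∞` and every sequence `(z_k)` in `X`,
`(1/b_{K+1}) ∑_{k ≤ K} |∑_{b_k+1 ≤ n < b_{k+1}} χ(Tⁿ z_k) u(n)| → 0`. -/
theorem character_orthogonality_affine_unipotent
    {X : Type*} [TopologicalSpace X] [CompactSpace X] [ConnectedSpace X]
    [TopologicalSpace.MetrizableSpace X] [AddCommGroup X] [IsTopologicalAddGroup X]
    [MeasurableSpace X] [BorelSpace X]
    (A : X ≃+ X) (hAcont : Continuous A) (hAinvcont : Continuous A.symm) (b : X)
    (T : X → X) (hT : T = fun x => A x + b)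
    (hdense : Dense ((AddSubgroup.closure (Set.range (fun x => A x - x) ∪ {b}) :
      AddSubgroup X) : Set X))
    (hchar : ∀ χ : X → ℂ, Continuous χ → (∀ x y, χ (x + y) = χ x * χ y) →
      (∀ x, ‖χ x‖ = 1) →
      ∃ m : ℕ, ∀ x, χ ((fun z => A z - z)^[m] x) = 1)
    (u : ℕ → ℂ) (hu_mult : ∀ m n : ℕ, Nat.Coprime m n → u (m * n) = u m * u n)
    (hu_bd : ∀ n, ‖u n‖ ≤ 1)
    (χ : X → ℂ) (hχcont : Continuous χ) (hχhom : ∀ x y, χ (x + y) = χ x * χ y)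
    (hχmod : ∀ x, ‖χ x‖ = 1) (hχne : ∃ x, χ x ≠ 1)
    (bseq : ℕ → ℕ) (hb1 : bseq 1 = 1) (hbmono : ∀ k ≥ 1, bseq k < bseq (k + 1))
    (hbgap : Tendsto (fun k : ℕ => bseq (k + 1) - bseq k) atTop atTop)
    (z : ℕ → X) :
    Tendsto (fun K : ℕ => (bseq (K + 1) : ℝ)⁻¹ *
        ∑ k ∈ Finset.Icc 1 K,
          ‖∑ n ∈ Finset.Ico (bseq k + 1) (bseq (k + 1)), χ (T^[n] (z k)) * u n‖)
      atTop (nhds 0) := by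
  subst hT
  exact character_orthogonality_affine_unipotent_general (A : X →+ X) hAcont b
    (by simpa only [AddMonoidHom.coe_coe] using hdense) u hu_mult hu_bd χ
    hχcont hχhom hχmod hχne (hchar χ hχcont hχhom hχmod) bseq hb1 hbmono hbgap z
end
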